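/- arXiv:1905.12207 — 8 statements merged into one kernel-verified Lean document; each statement's English description precedes it below -/
import Mathlib

section
/- Let C be a subset of ℝ^n whose (Euclidean) closure is not convex. Then for every M > 0 there exist an injective affine map γ : ℝ → ℝ^n (parametrizing a line L ⊆ ℝ^n), a convex function g : ℝ → ℝ, and points t₀, t₁ ∈ S := γ⁻¹(closure C), such that t₀ is a local minimum point of the restriction of g to S and g(t₀) > g(t₁) + M. (That is, a convex function which is finite on the line L and +∞ off it has arbitrarily bad local minima when restricted to the closure of C.) -/
/-- A closed set of reals with a gap at `s`, lying between two of its points `a < s < b`, carries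
an arbitrarily bad local minimum of a (decreasing, linear) convex function. -/
theorem exists_convexOn_bad_local_min_of_gap {S : Set ℝ} (hS : IsClosed S) {a s b : ℝ}
    (ha : a ∈ S) (hb : b ∈ S) (hs : s ∉ S) (has : a ≤ s) (hsb : s ≤ b) (M : ℝ) :
    ∃ (g : ℝ → ℝ) (t₀ t₁ : ℝ), ConvexOn ℝ Set.univ g ∧ t₀ ∈ S ∧ t₁ ∈ S ∧
      (∃ U : Set ℝ, IsOpen U ∧ t₀ ∈ U ∧ ∀ t ∈ U ∩ S, g t₀ ≤ g t) ∧ g t₁ + M < g t₀ := by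
  obtain ⟨c, ⟨hcS, -, hcs⟩, hc⟩ :=
    (isCompact_Icc.inter_left hS).exists_isGreatest ⟨a, ha, le_refl a, has⟩
  have hcs' : c < s := lt_of_le_of_ne hcs (fun h => hs (h ▸ hcS))
  have hac : a ≤ c := hc ⟨ha, le_refl a, has⟩
  have hbc : 0 < b - c := by linarith
  set K : ℝ := (|M| + 1) / (b - c)
  have hK0 : 0 ≤ K := by positivity
  have hKM : K * (b - c) = |M| + 1 := div_mul_cancel₀ _ hbc.ne'
  refine ⟨fun t => -K * t, c, b, (LinearMap.mul ℝ ℝ (-K)).convexOn convex_univ, hcS, hb,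
    ⟨Set.Iio s, isOpen_Iio, hcs', ?_⟩, ?_⟩
  · rintro t ⟨hts, htS⟩
    have htc : t ≤ c := by
      rcases le_total a t with hat | hta
      · exact hc ⟨htS, hat, le_of_lt hts⟩
      · exact hta.trans hac
    exact mul_le_mul_of_nonpos_left htc (neg_nonpos.mpr hK0)
  · linarith [le_abs_self M]

/-- If the closure of `C ⊆ ℝⁿ` is not convex, then for every `M > 0` there are
an injective affine map `γ : ℝ → ℝⁿ` (parametrizing a line), a convex function `g : ℝ → ℝ`,
and points `t₀ t₁ ∈ S = γ⁻¹(closure C)` such that `t₀` is a local minimum of `g` restricted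
to `S` and `g t₀ > g t₁ + M`. -/
theorem restriction_to_nonconvex_set_has_bad_local_minima
    (n : ℕ) (C : Set (Fin n → ℝ)) (hC : ¬ Convex ℝ (closure C)) :
    ∀ M : ℝ, 0 < M →
      ∃ (γ : ℝ →ᵃ[ℝ] (Fin n → ℝ)) (g : ℝ → ℝ) (t₀ t₁ : ℝ),
        Function.Injective ⇑γ ∧
        ConvexOn ℝ Set.univ g ∧
        t₀ ∈ ⇑γ ⁻¹' (closure C) ∧
        t₁ ∈ ⇑γ ⁻¹' (closure C) ∧
        (∃ U : Set ℝ, IsOpen U ∧ t₀ ∈ U ∧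
          ∀ t ∈ U ∩ ⇑γ ⁻¹' (closure C), g t₀ ≤ g t) ∧
        g t₁ + M < g t₀ := by
  intro M _
  obtain ⟨x, hx, y, hy, z, hz, hzC⟩ :
      ∃ x ∈ closure C, ∃ y ∈ closure C, ∃ z ∈ segment ℝ x y, z ∉ closure C := by
    simpa [convex_iff_segment_subset, Set.not_subset] using hC
  rw [segment_eq_image_lineMap] at hz
  obtain ⟨s, ⟨hs0, hs1⟩, rfl⟩ := hz
  have hxy : x ≠ y := by
    rintro rfl
    simp [hx] at hzC
  obtain ⟨g, t₀, t₁, hg⟩ := exists_convexOn_bad_local_min_of_gap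
    (isClosed_closure.preimage (AffineMap.lineMap_continuous (R := ℝ) (p := x) (q := y)))
    (a := 0) (b := 1) (by simpa using hx) (by simpa using hy) hzC hs0 hs1 M
  exact ⟨AffineMap.lineMap x y, g, t₀, t₁, AffineMap.lineMap_injective ℝ hxy, hg⟩
end

section
/- Fix an activation degree r ≥ 1 and an architecture d = (d_0, d_1, …, d_h) of positive integers with h ≥ 1. If the functional space F_{d,r} is a convex subset of Sym_{r^{h−1}}(ℝ^{d_0})^{d_h}, then F_{d,r} contains a nonempty open subset of Sym_{r^{h−1}}(ℝ^{d_0})^{d_h} (i.e., it is thick). Equivalently, if F_{d,r} is not thick, then it is not convex. -/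
/-- The polynomial network map: `net r d W h` is the tuple of `d h` homogeneous polynomials
in `d 0` variables computed by the network with architecture `(d 0, …, d h)`, activation
`ρ_r` (coordinatewise `r`-th power), and weight matrices `W j ∈ ℝ^{d (j+1) × d j}`. -/
noncomputable def net (r : ℕ) (d : ℕ → ℕ)
    (W : ∀ j : ℕ, Matrix (Fin (d (j + 1))) (Fin (d j)) ℝ) :
    (h : ℕ) → Fin (d h) → MvPolynomial (Fin (d 0)) ℝ
  | 0 => fun i => MvPolynomial.X i
  | h + 1 => fun i => ∑ k : Fin (d h), MvPolynomial.C (W h i k) *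
      net r d W h k ^ (if h = 0 then 1 else r)

open MvPolynomial in
/-- The `D`-th powers of real linear forms span the homogeneous polynomials of degree `D`. -/
theorem MvPolynomial.IsHomogeneous.mem_span_linear_form_pow {n D : ℕ} {q : MvPolynomial (Fin n) ℝ}
    (hq : q.IsHomogeneous D) :
    q ∈ Submodule.span ℝ (Set.range fun a : Fin n → ℝ => (∑ k, C (a k) * X k) ^ D) := by
  by_contra hmem
  obtain ⟨φ, hφq, hφ⟩ := Submodule.exists_le_ker_of_notMem hmem
  have hpow (a : Fin n → ℝ) : φ ((∑ k, C (a k) * X k) ^ D) = 0 :=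
    hφ (Submodule.subset_span ⟨a, rfl⟩)
  set P : MvPolynomial (Fin n) ℝ := ∑ m ∈ Finset.univ.piAntidiag D,
    monomial (Finsupp.equivFunOnFinite.symm m)
      ((Nat.multinomial Finset.univ m : ℝ) *
        φ (monomial (Finsupp.equivFunOnFinite.symm m) 1)) with hP
  have hP_zero : P = 0 := by
    refine MvPolynomial.funext fun a => ?_
    rw [map_zero, ← hpow a, Finset.sum_pow_eq_sum_piAntidiag, hP, map_sum, map_sum]
    refine Finset.sum_congr rfl fun m _ => ?_
    have hterm : (Nat.multinomial Finset.univ m : MvPolynomial (Fin n) ℝ) *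
        ∏ k, (C (a k) * X k) ^ m k = ((Nat.multinomial Finset.univ m : ℝ) * ∏ k, a k ^ m k) •
          monomial (Finsupp.equivFunOnFinite.symm m) (1 : ℝ) := by
      rw [smul_eq_C_mul, monomial_eq, Finsupp.prod_fintype _ _ (by simp)]
      simp [mul_pow, Finset.prod_mul_distrib, mul_assoc]
    rw [hterm, map_smul, eval_monomial, Finsupp.prod_fintype _ _ (by simp), smul_eq_mul]
    simp only [Finsupp.equivFunOnFinite_symm_apply_apply]
    ring
  have hmonomial (m : Fin n →₀ ℕ) (hm : m.degree = D) : φ (monomial m 1) = 0 := by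
    have hcoeff := congrArg (coeff m) hP_zero
    rw [hP, coeff_sum, Finset.sum_eq_single (m : Fin n → ℕ)] at hcoeff
    · simpa [coeff_monomial, Nat.multinomial_pos _ _ |>.ne'] using hcoeff
    · intro m' _ hne
      rw [coeff_monomial, if_neg]
      rintro rfl
      exact hne (by ext; simp)
    · intro hnot
      exact absurd (by simpa [Finset.mem_piAntidiag, Finsupp.degree_eq_sum] using hm) hnot
  apply hφq
  rw [q.as_sum, map_sum]
  refine Finset.sum_eq_zero fun m hm => ?_
  have hdeg : m.degree = D := by
    rw [Finsupp.degree_eq_weight_one]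
    exact hq (mem_support_iff.mp hm)
  have hsmul : monomial m (coeff m q) = coeff m q • monomial m (1 : ℝ) := by
    rw [smul_monomial, smul_eq_mul, mul_one]
  rw [hsmul, map_smul, hmonomial m hdeg, smul_zero]

theorem net_congr {r : ℕ} {d : ℕ → ℕ} {W W' : ∀ j : ℕ, Matrix (Fin (d (j + 1))) (Fin (d j)) ℝ}
    {h : ℕ} (hW : ∀ j < h, W j = W' j) : net r d W h = net r d W' h := by
  induction h with
  | zero => rfl
  | succ h ih =>
    funext i
    simp only [net, hW h h.lt_succ_self, ih fun j hj => hW j (hj.trans h.lt_succ_self)]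

/-- The outputs of a network can be rescaled independently by changing the last layer. -/
theorem exists_net_eq_smul {r : ℕ} {d : ℕ → ℕ}
    (W : ∀ j : ℕ, Matrix (Fin (d (j + 1))) (Fin (d j)) ℝ) (h : ℕ) (c : Fin (d (h + 1)) → ℝ) :
    ∃ W' : ∀ j : ℕ, Matrix (Fin (d (j + 1))) (Fin (d j)) ℝ,
      net r d W' (h + 1) = fun i => c i • net r d W (h + 1) i := by
  refine ⟨Function.update W h (Matrix.of fun i k => c i * W h i k), ?_⟩
  have hcongr : net r d (Function.update W h (Matrix.of fun i k => c i * W h i k)) h =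
      net r d W h := net_congr fun j hj => Function.update_of_ne hj.ne _ _
  funext i
  simp only [net, hcongr, Function.update_self, Matrix.of_apply, MvPolynomial.smul_eq_C_mul,
    Finset.mul_sum, map_mul, mul_assoc]

/-- Every iterated power of a linear form is computed by all the outputs of some network. -/
theorem exists_net_eq_linear_form_pow (r : ℕ) {d : ℕ → ℕ} (hd : ∀ j, 0 < d j)
    (a : Fin (d 0) → ℝ) :
    ∃ W : ∀ j : ℕ, Matrix (Fin (d (j + 1))) (Fin (d j)) ℝ,
      ∀ h i, net r d W (h + 1) i =
        (∑ k, MvPolynomial.C (a k) * MvPolynomial.X k) ^ r ^ h := by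
  refine ⟨fun
    | 0 => Matrix.of fun _ k => a k
    | j + 1 => Matrix.of fun _ k => if k = ⟨0, hd (j + 1)⟩ then 1 else 0, fun h => ?_⟩
  induction h with
  | zero => intro i; simp [net]
  | succ h ih =>
    intro i
    rw [net]
    simp [ih, pow_succ, pow_mul, apply_ite MvPolynomial.C]

/-- A convex functional space is a linear subspace. -/
def functionalSubmodule (r : ℕ) (d : ℕ → ℕ) (h : ℕ)
    (hconv : Convex ℝ {p : Fin (d (h + 1)) → MvPolynomial (Fin (d 0)) ℝ |
      ∃ W : ∀ j : ℕ, Matrix (Fin (d (j + 1))) (Fin (d j)) ℝ, net r d W (h + 1) = p}) :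
    Submodule ℝ (Fin (d (h + 1)) → MvPolynomial (Fin (d 0)) ℝ) where
  carrier := {p | ∃ W : ∀ j : ℕ, Matrix (Fin (d (j + 1))) (Fin (d j)) ℝ,
    net r d W (h + 1) = p}
  zero_mem' := by
    obtain ⟨W, hW⟩ := exists_net_eq_smul (r := r) (d := d) 0 h 0
    exact ⟨W, by rw [hW]; ext1 i; simp⟩
  add_mem' := by
    intro p q hp hq
    obtain ⟨V, hV⟩ := hconv hp hq (a := 1 / 2) (b := 1 / 2) (by norm_num) (by norm_num)
      (by norm_num)
    obtain ⟨W, hW⟩ := exists_net_eq_smul (r := r) V h fun _ => 2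
    refine ⟨W, ?_⟩
    rw [hW, hV]
    ext1 i
    simp [smul_smul]
  smul_mem' := by
    rintro c _ ⟨V, rfl⟩
    exact exists_net_eq_smul V h fun _ => c

/-- if the functional space `F_{d,r}` is convex, then it is thick, i.e. it
contains a nonempty open subset of `Sym_{r^{h-1}}(ℝ^{d₀})^{d_h}` (openness expressed via a
coefficientwise `ε`-box around a point of the functional space). -/
theorem convex_functional_space_is_thick
    (r h : ℕ) (hr : 1 ≤ r) (hh : 1 ≤ h) (d : ℕ → ℕ) (hd : ∀ j, 0 < d j)
    (hconv : Convex ℝ {p : Fin (d h) → MvPolynomial (Fin (d 0)) ℝ |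
      ∃ W : ∀ j : ℕ, Matrix (Fin (d (j + 1))) (Fin (d j)) ℝ, net r d W h = p}) :
    ∃ p : Fin (d h) → MvPolynomial (Fin (d 0)) ℝ,
      (∃ W : ∀ j : ℕ, Matrix (Fin (d (j + 1))) (Fin (d j)) ℝ, net r d W h = p) ∧
      ∃ ε : ℝ, 0 < ε ∧
        ∀ q : Fin (d h) → MvPolynomial (Fin (d 0)) ℝ,
          (∀ j, (q j).IsHomogeneous (r ^ (h - 1))) →
          (∀ j m, |MvPolynomial.coeff m (q j) - MvPolynomial.coeff m (p j)| < ε) →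
          ∃ W : ∀ j : ℕ, Matrix (Fin (d (j + 1))) (Fin (d j)) ℝ, net r d W h = q := by
  obtain ⟨h, rfl⟩ : ∃ k, h = k + 1 := ⟨h - 1, by omega⟩
  set F := functionalSubmodule r d h hconv
  refine ⟨0, F.zero_mem, 1, one_pos, fun q hq _ => ?_⟩
  suffices q ∈ F from this
  rw [← Finset.univ_sum_single q]
  refine F.sum_mem fun i _ => ?_
  suffices hspan : Submodule.span ℝ (Set.range fun a : Fin (d 0) → ℝ =>
      (∑ k, MvPolynomial.C (a k) * MvPolynomial.X k) ^ r ^ h) ≤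
        F.comap (LinearMap.single ℝ (fun _ => MvPolynomial (Fin (d 0)) ℝ) i) from
    hspan (hq i).mem_span_linear_form_pow
  rw [Submodule.span_le]
  rintro _ ⟨a, rfl⟩
  obtain ⟨V, hV⟩ := exists_net_eq_linear_form_pow r hd a
  obtain ⟨W, hW⟩ := exists_net_eq_smul (r := r) V h (Pi.single i 1)
  refine ⟨W, ?_⟩
  rw [hW]
  ext1 j
  by_cases hij : j = i
  · subst hij
    simp [hV]
  · simp [hij]
end

section
/- Fix an activation degree r ≥ 1 and an architecture d = (d_0, d_1, …, d_h) of positive integers with h ≥ 1. For every linear form ℓ in d_0 variables (a homogeneous polynomial of degree 1 with real coefficients) and every index i ∈ {1, …, d_h}, the tuple q_i(ℓ) = (0, …, 0, ℓ^{r^{h−1}}, 0, …, 0) ∈ Sym_{r^{h−1}}(ℝ^{d_0})^{d_h}, whose only nonzero entry is ℓ^{r^{h−1}} in position i, belongs to the functional space F_{d,r}. Consequently, the ℝ-linear span of F_{d,r} is all of Sym_{r^{h−1}}(ℝ^{d_0})^{d_h}. -/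
open MvPolynomial in
/-- A linear form is the sum of its coefficients times the variables. -/
theorem isHomogeneous_one_eq_sum {σ R : Type*} [Fintype σ] [CommSemiring R]
    {ℓ : MvPolynomial σ R} (hℓ : ℓ.IsHomogeneous 1) :
    ∑ k, C (ℓ.coeff (Finsupp.single k 1)) * X k = ℓ := by
  classical
  have hmem : ℓ ∈ Submodule.span R (Set.range (X : σ → MvPolynomial σ R)) := by
    rw [← homogeneousSubmodule_one_eq_span_X]
    exact hℓ
  induction hmem using Submodule.span_induction with
  | mem x hx =>
    obtain ⟨i, rfl⟩ := hx
    rw [Finset.sum_eq_single i]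
    · simp
    · intro b _ hb
      simp [coeff_X, Finsupp.single_left_inj, hb.symm]
    · simp
  | zero => simp
  | add x y hx hy ihx ihy =>
    rw [← homogeneousSubmodule_one_eq_span_X] at hx hy
    simp only [coeff_add, C_add, add_mul, Finset.sum_add_distrib, ihx hx, ihy hy]
  | smul a x hx ih =>
    rw [← homogeneousSubmodule_one_eq_span_X] at hx
    conv_rhs => rw [← ih hx]
    simp only [coeff_smul, smul_eq_mul, C_mul, Finset.smul_sum, mul_assoc, smul_eq_C_mul (_ * _)]

/-- If all values of a vector-valued polynomial lie in a subspace, so do its coefficients. -/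
theorem Submodule.coeff_mem_of_forall_sum_pow_smul_mem {K V : Type*} [Field K] [Infinite K]
    [AddCommGroup V] [Module K V] (M : Submodule K V) (n : ℕ) (c : ℕ → V)
    (hc : ∀ t : K, ∑ k ∈ Finset.range n, t ^ k • c k ∈ M) {k : ℕ} (hk : k < n) : c k ∈ M := by
  by_contra hkM
  obtain ⟨f, hfk, hfM⟩ := M.exists_le_ker_of_notMem hkM
  have hzero : ∑ j ∈ Finset.range n, Polynomial.C (f (c j)) * Polynomial.X ^ j = 0 := by
    refine Polynomial.funext fun t => ?_
    have := LinearMap.mem_ker.mp (hfM (hc t))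
    simpa [Polynomial.eval_finsetSum, mul_comm (f _)] using this
  apply hfk
  simpa [Polynomial.finsetSum_coeff, Polynomial.coeff_C_mul, Polynomial.coeff_X_pow, hk]
    using congrArg (fun p => Polynomial.coeff p k) hzero

open MvPolynomial in
/-- A product of `j` linear forms times the `k`-th power of a linear form is a combination of
`(j + k)`-th powers of linear forms. -/
theorem mul_pow_mem_span_pow_linear {σ K : Type*} [Field K] [CharZero K] (j : ℕ) :
    ∀ k : ℕ, ∀ q ∈ homogeneousSubmodule σ K 1 ^ j, ∀ m ∈ homogeneousSubmodule σ K 1,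
      q * m ^ k ∈ Submodule.span K
        ((fun ℓ : MvPolynomial σ K => ℓ ^ (j + k)) '' homogeneousSubmodule σ K 1) := by
  induction j with
  | zero =>
    intro k q hq m hm
    obtain ⟨a, rfl⟩ := Submodule.mem_one.mp (by simpa only [pow_zero] using hq)
    rw [← Algebra.smul_def, Nat.zero_add]
    exact Submodule.smul_mem _ _ (Submodule.subset_span ⟨m, hm, rfl⟩)
  | succ j ih =>
    intro k q hq m hm
    rw [pow_succ] at hq
    induction hq using Submodule.mul_induction_on' with
    | mem_mul_mem q hq l hl =>
      have hcoeff := Submodule.coeff_mem_of_forall_sum_pow_smul_mem (K := K)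
        (Submodule.span K ((fun ℓ : MvPolynomial σ K => ℓ ^ (j + 1 + k)) ''
          homogeneousSubmodule σ K 1)) (k + 2)
        (fun i => q * (l ^ i * m ^ (k + 1 - i) * ((k + 1).choose i : MvPolynomial σ K)))
        (fun t => by
          have h := ih (k + 1) q hq (t • l + m)
            (add_mem (Submodule.smul_mem _ t hl) hm)
          rw [add_pow, Finset.mul_sum, show j + (k + 1) = j + 1 + k by ring] at h
          simpa only [smul_pow, smul_mul_assoc, mul_smul_comm] using h)
        (k := 1) (by omega)
      have hne : ((k : K) + 1) ≠ 0 := Nat.cast_add_one_ne_zero k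
      convert Submodule.smul_mem _ ((k : K) + 1)⁻¹ hcoeff using 1
      rw [eq_inv_smul_iff₀ hne, smul_eq_C_mul]
      simp
      ring
    | add x hx y hy ihx ihy =>
      rw [add_mul]
      exact add_mem ihx ihy

open MvPolynomial in
/-- Powers of linear forms span the homogeneous polynomials in characteristic zero. -/
theorem span_pow_linear_eq_homogeneousSubmodule {σ K : Type*} [Field K] [CharZero K] (n : ℕ) :
    Submodule.span K ((fun ℓ : MvPolynomial σ K => ℓ ^ n) '' homogeneousSubmodule σ K 1) =
      homogeneousSubmodule σ K n := by
  apply le_antisymm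
  · rw [Submodule.span_le]
    rintro _ ⟨ℓ, hℓ, rfl⟩
    simpa using IsHomogeneous.pow (m := 1) hℓ n
  · intro q hq
    rw [← homogeneousSubmodule_one_pow] at hq
    simpa using mul_pow_mem_span_pow_linear n 0 q hq 0 (zero_mem _)

/-- The coordinates of a network with `h + 1` layers are homogeneous of degree `r ^ h`. -/
theorem net_isHomogeneous (r : ℕ) (d : ℕ → ℕ)
    (W : ∀ j : ℕ, Matrix (Fin (d (j + 1))) (Fin (d j)) ℝ) (h : ℕ) :
    ∀ i, (net r d W (h + 1) i).IsHomogeneous (r ^ h) := by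
  induction h with
  | zero =>
    intro i
    refine MvPolynomial.IsHomogeneous.sum _ _ _ fun k _ => ?_
    simpa [net] using (MvPolynomial.isHomogeneous_X ℝ k).C_mul (W 0 i k)
  | succ h ih =>
    intro i
    refine MvPolynomial.IsHomogeneous.sum _ _ _ fun k _ => ?_
    simpa [pow_succ] using ((ih k).pow r).C_mul (W (h + 1) i k)

/-- Every tuple with a single nonzero entry `ℓ ^ (r ^ h)`, `ℓ` a linear form, is a network map. -/
theorem exists_net_eq_single_pow (r h : ℕ) (d : ℕ → ℕ) (hd : ∀ j, 0 < d j)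
    {ℓ : MvPolynomial (Fin (d 0)) ℝ} (hℓ : ℓ.IsHomogeneous 1) (i : Fin (d (h + 1))) :
    ∃ W : ∀ j : ℕ, Matrix (Fin (d (j + 1))) (Fin (d j)) ℝ,
      net r d W (h + 1) = fun j => if j = i then ℓ ^ (r ^ h) else 0 := by
  let V : ∀ j : ℕ, Matrix (Fin (d (j + 1))) (Fin (d j)) ℝ
    | 0 => fun _ k => ℓ.coeff (Finsupp.single k 1)
    | j + 1 => fun _ k => if k = ⟨0, hd (j + 1)⟩ then 1 else 0
  let W : ∀ j : ℕ, Matrix (Fin (d (j + 1))) (Fin (d j)) ℝ :=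
    fun j a k => if j = h → a.val = i.val then V j a k else 0
  have key : ∀ j ≤ h, ∀ a, net r d W (j + 1) a =
      if j = h → a.val = i.val then ℓ ^ (r ^ j) else 0 := by
    intro j
    induction j with
    | zero =>
      intro _ a
      by_cases ha : 0 = h → a.val = i.val
      · simpa only [net, W, V, if_pos ha, if_true, pow_one, pow_zero]
          using isHomogeneous_one_eq_sum hℓ
      · simp only [net, W, if_neg ha, map_zero, zero_mul, Finset.sum_const_zero]
    | succ j ih =>
      intro hj a
      by_cases ha : j + 1 = h → a.val = i.val
      · have hne : ¬ j = h := by omega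
        rw [net, if_pos ha]
        refine (Finset.sum_eq_single ⟨0, hd (j + 1)⟩ ?_ ?_).trans ?_
        · intro b _ hb
          simp [W, V, hb]
        · simp
        · rw [ih (by omega)]
          simp [W, V, if_pos ha, hne, pow_succ, pow_mul]
      · rw [net]
        simp only [W, if_neg ha, map_zero, zero_mul, Finset.sum_const_zero]
  refine ⟨W, funext fun a => ?_⟩
  rw [key h le_rfl a]
  simp [Fin.ext_iff]


/-- every tuple `q_i(ℓ) = (0, …, 0, ℓ^{r^{h-1}}, 0, …, 0)` (for `ℓ` a linear
form) belongs to the functional space `F_{d,r}`; consequently the linear span of `F_{d,r}`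
is the whole ambient space `Sym_{r^{h-1}}(ℝ^{d₀})^{d_h}`. -/
theorem functional_space_contains_powers_of_linear_forms_and_spans
    (r h : ℕ) (hr : 1 ≤ r) (hh : 1 ≤ h) (d : ℕ → ℕ) (hd : ∀ j, 0 < d j) :
    (∀ ℓ : MvPolynomial (Fin (d 0)) ℝ, ℓ.IsHomogeneous 1 → ∀ i : Fin (d h),
      (fun j => if j = i then ℓ ^ (r ^ (h - 1)) else 0) ∈
        {p : Fin (d h) → MvPolynomial (Fin (d 0)) ℝ |
          ∃ W : ∀ j : ℕ, Matrix (Fin (d (j + 1))) (Fin (d j)) ℝ, net r d W h = p}) ∧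
    Submodule.span ℝ {p : Fin (d h) → MvPolynomial (Fin (d 0)) ℝ |
        ∃ W : ∀ j : ℕ, Matrix (Fin (d (j + 1))) (Fin (d j)) ℝ, net r d W h = p}
      = Submodule.pi Set.univ
          (fun _ : Fin (d h) => MvPolynomial.homogeneousSubmodule (Fin (d 0)) ℝ (r ^ (h - 1))) := by
  obtain ⟨h, rfl⟩ := Nat.exists_eq_add_of_le' hh
  simp only [Nat.add_sub_cancel]
  have hpow := fun ℓ (hℓ : MvPolynomial.IsHomogeneous ℓ 1) i =>
    exists_net_eq_single_pow r h d hd hℓ i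
  refine ⟨hpow, le_antisymm ?_ ?_⟩
  · rw [Submodule.span_le]
    rintro _ ⟨W, rfl⟩ i _
    exact net_isHomogeneous r d W h i
  · intro p hp
    rw [← Finset.univ_sum_single p]
    refine Submodule.sum_mem _ fun i _ => ?_
    have hpi := hp i (Set.mem_univ i)
    rw [← span_pow_linear_eq_homogeneousSubmodule] at hpi
    rw [← LinearMap.coe_single ℝ, ← Submodule.mem_comap]
    refine Submodule.span_le.mpr ?_ hpi
    rintro _ ⟨ℓ, hℓ, rfl⟩
    obtain ⟨W, hW⟩ := hpow ℓ hℓ i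
    refine Submodule.subset_span ⟨W, hW.trans (funext fun j => ?_)⟩
    simp [Pi.single_apply]
end

section
/- Fix an activation degree r ≥ 1 and an architecture d = (d_0, d_1, …, d_{h−1}, d_h) of positive integers with h ≥ 2, and suppose the functional space F_{d,r} contains a nonempty open subset of Sym_{r^{h−1}}(ℝ^{d_0})^{d_h} (i.e., the functional variety is filling / F_{d,r} is thick). Then the architecture d' = (d_0, 2d_1, …, 2d_{h−1}, d_h) obtained by doubling all intermediate widths has a filling functional space: F_{d',r} = Sym_{r^{h−1}}(ℝ^{d_0})^{d_h}, i.e., every d_h-tuple of homogeneous degree-r^{h−1} polynomials in d_0 variables is exactly realized by some choice of weights for the architecture d'. -/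
/-- The architecture obtained from `(d 0, …, d h)` by doubling all intermediate widths. -/
def double (d : ℕ → ℕ) (h : ℕ) : ℕ → ℕ := fun j => if j = 0 ∨ j = h then d j else 2 * d j

theorem net_succ_apply (r : ℕ) (d : ℕ → ℕ)
    (W : ∀ j : ℕ, Matrix (Fin (d (j + 1))) (Fin (d j)) ℝ) (h : ℕ) (i : Fin (d (h + 1))) :
    net r d W (h + 1) i = ∑ k : Fin (d h), MvPolynomial.C (W h i k) *
      net r d W h k ^ (if h = 0 then 1 else r) :=
  rfl

theorem double_zero (d : ℕ → ℕ) (h : ℕ) : double d h 0 = d 0 := rfl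

theorem double_self (d : ℕ → ℕ) (h : ℕ) : double d h h = d h := by simp [double]

/-- The network polynomials with `k + 1` layers are homogeneous of degree `r ^ k`. -/
theorem net_succ_isHomogeneous (r : ℕ) (d : ℕ → ℕ)
    (W : ∀ j : ℕ, Matrix (Fin (d (j + 1))) (Fin (d j)) ℝ) (k : ℕ) (i : Fin (d (k + 1))) :
    (net r d W (k + 1) i).IsHomogeneous (r ^ k) := by
  induction k with
  | zero =>
    refine MvPolynomial.IsHomogeneous.sum _ _ _ fun l _ => ?_
    simpa [net] using (MvPolynomial.isHomogeneous_X ℝ l).C_mul (W 0 i l)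
  | succ k ih =>
    refine MvPolynomial.IsHomogeneous.sum _ _ _ fun l _ => ?_
    simpa [pow_succ] using ((ih l).pow r).C_mul (W (k + 1) i l)

/-- The coefficients of finitely many polynomials are bounded. -/
theorem exists_abs_coeff_lt {σ ι : Type*} [Fintype ι] (q : ι → MvPolynomial σ ℝ) :
    ∃ B : ℝ, 0 < B ∧ ∀ j m, |MvPolynomial.coeff m (q j)| < B := by
  have hnn : ∀ j, 0 ≤ ∑ m ∈ (q j).support, |MvPolynomial.coeff m (q j)| :=
    fun j => Finset.sum_nonneg fun m _ => abs_nonneg _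
  refine ⟨1 + ∑ j, ∑ m ∈ (q j).support, |MvPolynomial.coeff m (q j)|, ?_, fun j m => ?_⟩
  · have := Finset.sum_nonneg fun j (_ : j ∈ Finset.univ) => hnn j
    linarith
  · have hj := Finset.single_le_sum (fun j _ => hnn j) (Finset.mem_univ j)
    have hm : |MvPolynomial.coeff m (q j)|
        ≤ ∑ m ∈ (q j).support, |MvPolynomial.coeff m (q j)| := by
      by_cases h : m ∈ (q j).support
      · exact Finset.single_le_sum (f := fun m => |MvPolynomial.coeff m (q j)|)
          (fun m _ => abs_nonneg _) h
      · rw [MvPolynomial.notMem_support_iff.mp h, abs_zero]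
        exact hnn j
    linarith

/-- A doubled hidden layer consists of two copies of the original one. -/
def hiddenEquiv (d : ℕ → ℕ) (h j : ℕ) (h0 : j ≠ 0) (hj : j ≠ h) :
    Fin (d j) ⊕ Fin (d j) ≃ Fin (double d h j) :=
  finSumFinEquiv.trans (finCongr (by simp [double, h0, hj, two_mul]))

/-- The weights on the doubled architecture that run the networks `U` and `V` in parallel and
output `a` times the first plus `b` times the second. -/
noncomputable def parallelWeights (d : ℕ → ℕ) (n : ℕ) (a b : ℝ)
    (U V : ∀ j : ℕ, Matrix (Fin (d (j + 1))) (Fin (d j)) ℝ) :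
    ∀ j : ℕ, Matrix (Fin (double d (n + 2) (j + 1))) (Fin (double d (n + 2) j)) ℝ
  | 0 => (Matrix.fromRows (U 0) (V 0)).submatrix
      (hiddenEquiv d (n + 2) 1 (by lia) (by lia)).symm (Fin.cast (double_zero d (n + 2)))
  | j + 1 =>
    if hj : j < n then
      (Matrix.fromBlocks (U (j + 1)) 0 0 (V (j + 1))).submatrix
        (hiddenEquiv d (n + 2) (j + 2) (by lia) (by lia)).symm
        (hiddenEquiv d (n + 2) (j + 1) (by lia) (by lia)).symm
    else if hn : j = n then
      (Matrix.fromCols (a • U (j + 1)) (b • V (j + 1))).submatrix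
        (Fin.cast (by rw [hn, double_self]))
        (hiddenEquiv d (n + 2) (j + 1) (by lia) (by lia)).symm
    else 0

/-- The hidden layers of the parallel network are those of the two networks side by side. -/
theorem net_parallelWeights_hidden (r : ℕ) (d : ℕ → ℕ) (n : ℕ) (a b : ℝ)
    (U V : ∀ j : ℕ, Matrix (Fin (d (j + 1))) (Fin (d j)) ℝ) (j : ℕ) (hj : j ≤ n)
    (s : Fin (d (j + 1)) ⊕ Fin (d (j + 1))) :
    MvPolynomial.rename (Fin.cast (double_zero d (n + 2)))
        (net r (double d (n + 2)) (parallelWeights d n a b U V) (j + 1)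
          (hiddenEquiv d (n + 2) (j + 1) (by lia) (by lia) s)) =
      Sum.elim (net r d U (j + 1)) (net r d V (j + 1)) s := by
  induction j with
  | zero =>
    rw [net_succ_apply, ← (finCongr (double_zero d (n + 2)).symm).sum_comp]
    cases s <;> simp [parallelWeights, net]
  | succ j ih =>
    rw [net_succ_apply, ← (hiddenEquiv d (n + 2) (j + 1) (by lia) (by lia)).sum_comp, map_sum]
    simp only [map_mul, map_pow, MvPolynomial.rename_C, ih (by lia), parallelWeights,
      dif_pos (show j < n by lia), Matrix.submatrix_apply, Equiv.symm_apply_apply]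
    cases s <;> simp [net_succ_apply _ _ _ (j + 1)]

/-- The parallel network computes the prescribed linear combination of the two networks. -/
theorem rename_net_parallelWeights (r : ℕ) (d : ℕ → ℕ) (n : ℕ) (a b : ℝ)
    (U V : ∀ j : ℕ, Matrix (Fin (d (j + 1))) (Fin (d j)) ℝ)
    (i : Fin (double d (n + 2) (n + 2))) :
    MvPolynomial.rename (Fin.cast (double_zero d (n + 2)))
        (net r (double d (n + 2)) (parallelWeights d n a b U V) (n + 2) i) =
      MvPolynomial.C a * net r d U (n + 2) (Fin.cast (double_self d (n + 2)) i) +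
        MvPolynomial.C b * net r d V (n + 2) (Fin.cast (double_self d (n + 2)) i) := by
  rw [net_succ_apply, ← (hiddenEquiv d (n + 2) (n + 1) (by lia) (by lia)).sum_comp, map_sum]
  simp only [map_mul, map_pow, MvPolynomial.rename_C,
    net_parallelWeights_hidden r d n a b U V n le_rfl, parallelWeights, dif_neg (lt_irrefl n)]
  simp [net_succ_apply _ _ _ (n + 1), Finset.mul_sum, mul_assoc]

/-- The parallel network computes the prescribed linear combination of the two networks, with the
input variables of the two architectures identified definitionally. -/
theorem net_parallelWeights (r : ℕ) (d : ℕ → ℕ) (n : ℕ) (a b : ℝ)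
    (U V : ∀ j : ℕ, Matrix (Fin (d (j + 1))) (Fin (d j)) ℝ)
    (i : Fin (double d (n + 2) (n + 2))) :
    net r (double d (n + 2)) (parallelWeights d n a b U V) (n + 2) i =
      (MvPolynomial.C a * net r d U (n + 2) (Fin.cast (double_self d (n + 2)) i) +
        MvPolynomial.C b * net r d V (n + 2) (Fin.cast (double_self d (n + 2)) i) :
        MvPolynomial (Fin (d 0)) ℝ) :=
  (MvPolynomial.rename_id_apply _).symm.trans (rename_net_parallelWeights r d n a b U V i)

/-- if architecture `d = (d_0, …, d_h)` has a thick functional space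
(it contains a nonempty open subset of the ambient space, expressed via a coefficientwise
`ε`-box around one of its points), then the doubled architecture
`d' = (d_0, 2d_1, …, 2d_{h-1}, d_h)` has a *filling functional space*: every `d_h`-tuple of
homogeneous degree-`r^{h-1}` polynomials in `d_0` variables is exactly realized by weights. -/
theorem doubling_thick_architecture_fills
    (r h : ℕ) (hr : 1 ≤ r) (hh : 2 ≤ h) (d : ℕ → ℕ) (hd : ∀ j, 0 < d j)
    (hthick : ∃ p : Fin (d h) → MvPolynomial (Fin (d 0)) ℝ,
      (∃ W : ∀ j : ℕ, Matrix (Fin (d (j + 1))) (Fin (d j)) ℝ, net r d W h = p) ∧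
      ∃ ε : ℝ, 0 < ε ∧
        ∀ q : Fin (d h) → MvPolynomial (Fin (d 0)) ℝ,
          (∀ j, (q j).IsHomogeneous (r ^ (h - 1))) →
          (∀ j m, |MvPolynomial.coeff m (q j) - MvPolynomial.coeff m (p j)| < ε) →
          ∃ W : ∀ j : ℕ, Matrix (Fin (d (j + 1))) (Fin (d j)) ℝ, net r d W h = q) :
    ∀ q : Fin (d h) → MvPolynomial (Fin (d 0)) ℝ,
      (∀ j, (q j).IsHomogeneous (r ^ (h - 1))) →
      ∃ W' : ∀ j : ℕ, Matrix (Fin (double d h (j + 1))) (Fin (double d h j)) ℝ,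
        ∀ i : Fin (double d h h),
          net r (double d h) W' h i = q (Fin.cast (by simp [double]) i) := by
  obtain ⟨n, rfl⟩ : ∃ n, h = n + 2 := ⟨h - 2, by lia⟩
  obtain ⟨p, ⟨U, rfl⟩, ε, hε, hbox⟩ := hthick
  intro q hq
  obtain ⟨B, hB, hqB⟩ := exists_abs_coeff_lt q
  obtain ⟨V, hV⟩ := hbox
    (fun j => net r d U (n + 2) j + MvPolynomial.C (ε / B) * q j)
    (fun j => (net_succ_isHomogeneous r d U (n + 1) j).add ((hq j).C_mul _))
    (fun j m => by
      rw [MvPolynomial.coeff_add, add_sub_cancel_left, MvPolynomial.coeff_C_mul, abs_mul,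
        abs_of_pos (div_pos hε hB), div_mul_eq_mul_div, div_lt_iff₀ hB]
      exact mul_lt_mul_of_pos_left (hqB j m) hε)
  refine ⟨parallelWeights d n (-(B / ε)) (B / ε) U V, fun i => ?_⟩
  refine (net_parallelWeights r d n _ _ U V i).trans ?_
  have hC : (MvPolynomial.C (B / ε) : MvPolynomial (Fin (d 0)) ℝ) * MvPolynomial.C (ε / B) = 1 := by
    rw [← MvPolynomial.C_mul, div_mul_div_cancel₀ hε.ne', div_self hB.ne', MvPolynomial.C_1]
  rw [hV, MvPolynomial.C_neg, mul_add, ← mul_assoc, hC, one_mul, neg_mul, neg_add_cancel_left]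
end

section
/- For all positive integers d, k, s there exists an integer r̃ = r̃(d, k, s) with the following property: whenever p_1, …, p_k ∈ ℝ[x_1, …, x_d] are nonzero homogeneous polynomials, all of the same degree s, no two of which are linearly dependent over ℝ (i.e., p_i and p_j are not scalar multiples of each other for i ≠ j), then for every integer r > r̃ the polynomials p_1^r, …, p_k^r are linearly independent over ℝ. -/
open Polynomial in
theorem exists_isCoprime_eq_mul_eq_mul (u v : ℝ[X]) :
    ∃ q a b : ℝ[X], IsCoprime a b ∧ u = q * a ∧ v = q * b := by
  classical
  let := EuclideanDomain.gcdMonoid ℝ[X]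
  obtain ⟨a, b, hu, hv, hab⟩ := extract_gcd u v
  exact ⟨_, a, b, (gcd_isUnit_iff a b).mp hab, hu, hv⟩

open Polynomial in
/-- Two polynomials with vanishing Wronskian are proportional. -/
theorem exists_eq_C_mul_of_wronskian_eq_zero {u v : ℝ[X]} (hv : v ≠ 0)
    (h : wronskian u v = 0) : ∃ c : ℝ, u = C c * v := by
  obtain ⟨q, a, b, hab, rfl, rfl⟩ := exists_isCoprime_eq_mul_eq_mul u v
  have hq : q ≠ 0 := left_ne_zero_of_mul hv
  have hb : b ≠ 0 := right_ne_zero_of_mul hv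
  have hmul : wronskian (q * a) (q * b) = q ^ 2 * wronskian a b := by
    simp only [wronskian, derivative_mul]
    ring
  rw [hmul] at h
  obtain ⟨ha', hb'⟩ := hab.wronskian_eq_zero_iff.mp
    ((mul_eq_zero.mp h).resolve_left (pow_ne_zero 2 hq))
  obtain ⟨α, rfl⟩ : ∃ α : ℝ, a = C α := ⟨_, eq_C_of_derivative_eq_zero ha'⟩
  obtain ⟨β, rfl⟩ : ∃ β : ℝ, b = C β := ⟨_, eq_C_of_derivative_eq_zero hb'⟩
  refine ⟨α / β, ?_⟩
  rw [mul_left_comm, ← C_mul, div_mul_cancel₀ _ (C_ne_zero.mp hb)]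

open Polynomial in
theorem natDegree_eq_zero_of_pow_dvd {a g : ℝ[X]} {r : ℕ} (hg : g ≠ 0) (hgr : g.natDegree < r)
    (h : a ^ r ∣ g) : a.natDegree = 0 := by
  have hle := natDegree_le_of_dvd h hg
  rw [natDegree_pow] at hle
  by_contra hne
  have := Nat.le_mul_of_pos_right r (Nat.pos_of_ne_zero hne)
  omega

open Polynomial in
/-- If `g * f ^ r = h * e ^ r` with `r` exceeding the degrees of `g` and `h`,
then `f` and `e` are proportional. -/
theorem exists_eq_smul_of_mul_pow_eq_mul_pow {f e g h : ℝ[X]} {r : ℕ} (he : e ≠ 0)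
    (hg : g ≠ 0) (hh : h ≠ 0) (hgr : g.natDegree < r) (hhr : h.natDegree < r)
    (heq : g * f ^ r = h * e ^ r) : ∃ c : ℝ, f = c • e := by
  obtain ⟨q, a, b, hab, rfl, rfl⟩ := exists_isCoprime_eq_mul_eq_mul f e
  have hq : q ≠ 0 := left_ne_zero_of_mul he
  have hb : b ≠ 0 := right_ne_zero_of_mul he
  have hcancel : g * a ^ r = h * b ^ r := by
    refine mul_left_cancel₀ (pow_ne_zero r hq) ?_
    linear_combination heq
  have ha0 : a.natDegree = 0 := natDegree_eq_zero_of_pow_dvd hh hhr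
    (hab.pow.dvd_of_dvd_mul_right (hcancel ▸ dvd_mul_left _ _))
  have hb0 : b.natDegree = 0 := natDegree_eq_zero_of_pow_dvd hg hgr
    (hab.symm.pow.dvd_of_dvd_mul_right (Dvd.intro_left h hcancel.symm))
  obtain ⟨α, rfl⟩ := natDegree_eq_zero.mp ha0
  obtain ⟨β, rfl⟩ := natDegree_eq_zero.mp hb0
  refine ⟨α / β, ?_⟩
  rw [smul_eq_C_mul, mul_left_comm, ← C_mul, div_mul_cancel₀ _ (C_ne_zero.mp hb)]

open Polynomial in
/-- High powers of pairwise non-proportional univariate polynomials of bounded degree satisfy no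
nontrivial linear relation with polynomial coefficients of bounded degree. -/
theorem exists_bound_eq_zero_of_sum_mul_pow_eq_zero (S k : ℕ) :
    ∀ D : ℕ, ∃ R : ℕ, ∀ f g : Fin k → ℝ[X], (∀ i, f i ≠ 0) → (∀ i, (f i).natDegree ≤ S) →
      (∀ i j, i ≠ j → ∀ c : ℝ, f i ≠ c • f j) → (∀ i, (g i).natDegree ≤ D) →
      ∀ r, R < r → ∑ i, g i * f i ^ r = 0 → ∀ i, g i = 0 := by
  induction k with
  | zero => exact fun D => ⟨0, fun f g _ _ _ _ r _ _ i => i.elim0⟩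
  | succ k ih =>
    intro D
    obtain ⟨R₁, hR₁⟩ := ih D
    obtain ⟨R₂, hR₂⟩ := ih (2 * D + 2 * S)
    refine ⟨R₁ + R₂ + D + 1, fun f g hf hfS hfp hgD r hr hsum => ?_⟩
    obtain ⟨n, rfl⟩ : ∃ n, r = n + 1 := ⟨r - 1, by omega⟩
    have hpair : ∀ i j : Fin k, i ≠ j → ∀ c : ℝ, f i.castSucc ≠ c • f j.castSucc :=
      fun i j hij => hfp _ _ (by simpa using hij)
    rw [Fin.sum_univ_castSucc] at hsum
    set F := f (Fin.last k)
    set G := g (Fin.last k)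
    have hF0 : F ≠ 0 := hf _
    by_cases hG0 : G = 0
    · have := hR₁ (fun i => f i.castSucc) (fun i => g i.castSucc) (fun i => hf _)
        (fun i => hfS _) hpair (fun i => hgD _) (n + 1) (by omega) (by simpa [hG0] using hsum)
      exact fun i => Fin.lastCases hG0 this i
    exfalso
    set w : Fin k → ℝ[X] := fun i =>
      g i.castSucc * derivative G * (f i.castSucc * F) - derivative (g i.castSucc) * G *
        (f i.castSucc * F) + C ((n : ℝ) + 1) * (g i.castSucc * G) *
        (f i.castSucc * derivative F - derivative (f i.castSucc) * F) with hw
    have hwron : ∀ i, wronskian (g i.castSucc * f i.castSucc ^ (n + 1)) (G * F ^ (n + 1)) =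
        F ^ n * (w i * f i.castSucc ^ n) := by
      intro i
      simp only [wronskian, hw, derivative_mul, derivative_pow_succ]
      ring
    have hsumw : ∑ i, w i * f i.castSucc ^ n = 0 := by
      refine (mul_eq_zero.mp ?_).resolve_left (pow_ne_zero n hF0)
      rw [Finset.mul_sum, ← Finset.sum_congr rfl fun i _ => hwron i]
      have : ∑ i : Fin k, g i.castSucc * f i.castSucc ^ (n + 1) = - (G * F ^ (n + 1)) :=
        eq_neg_of_add_eq_zero_left hsum
      simp only [wronskian]
      rw [Finset.sum_sub_distrib, ← Finset.sum_mul, ← Finset.sum_mul, ← derivative_sum, this, derivative_neg]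
      ring
    have hwdeg : ∀ i, (w i).natDegree ≤ 2 * D + 2 * S := by
      intro i
      have h1 := hgD i.castSucc
      have h2 : G.natDegree ≤ D := hgD _
      have h3 := hfS i.castSucc
      have h4 : F.natDegree ≤ S := hfS _
      have d1 := (natDegree_derivative_le (g i.castSucc)).trans (Nat.sub_le _ _) |>.trans h1
      have d2 := (natDegree_derivative_le G).trans (Nat.sub_le _ _) |>.trans h2
      have d3 := (natDegree_derivative_le (f i.castSucc)).trans (Nat.sub_le _ _) |>.trans h3
      have d4 := (natDegree_derivative_le F).trans (Nat.sub_le _ _) |>.trans h4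
      have e : 2 * D + 2 * S = (D + D) + (S + S) := by ring
      have e' : (D + D) + (S + S) = (0 + (D + D)) + (S + S) := by ring
      rw [e]
      refine natDegree_add_le_of_degree_le ((natDegree_sub_le_of_le ?_ ?_).trans (max_self _).le) ?_
      · exact natDegree_mul_le_of_le (natDegree_mul_le_of_le h1 d2) (natDegree_mul_le_of_le h3 h4)
      · exact natDegree_mul_le_of_le (natDegree_mul_le_of_le d1 h2) (natDegree_mul_le_of_le h3 h4)
      · rw [e']
        refine natDegree_mul_le_of_le (natDegree_mul_le_of_le (natDegree_C _).le
          (natDegree_mul_le_of_le h1 h2)) ?_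
        exact (natDegree_sub_le_of_le (natDegree_mul_le_of_le h3 d4)
          (natDegree_mul_le_of_le d3 h4)).trans (max_self _).le
    have hw0 : ∀ i, w i = 0 := hR₂ (fun i => f i.castSucc) w (fun i => hf _) (fun i => hfS _)
      hpair hwdeg n (by omega) hsumw
    have hg0 : ∀ i : Fin k, g i.castSucc = 0 := by
      intro i
      by_contra hgi
      obtain ⟨c, hc⟩ := exists_eq_C_mul_of_wronskian_eq_zero
        (mul_ne_zero hG0 (pow_ne_zero (n + 1) hF0)) ((hwron i).trans (by simp [hw0 i]))
      have hc0 : c ≠ 0 := by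
        rintro rfl
        simp [hgi, hf] at hc
      rw [← mul_assoc] at hc
      have h1 := hgD i.castSucc
      have h2 : G.natDegree ≤ D := hgD _
      obtain ⟨c', hc'⟩ := exists_eq_smul_of_mul_pow_eq_mul_pow hF0 hgi
        (mul_ne_zero (C_ne_zero.mpr hc0) hG0) (by omega)
        (by rw [natDegree_C_mul hc0]; omega) hc
      exact hfp _ _ (Fin.castSucc_lt_last i).ne c' hc'
    simp [hg0, hG0, hF0] at hsum

/-- The Kronecker substitution `X i ↦ X ^ ((s + 1) ^ i)`. -/
noncomputable def kroneckerSubst (d s : ℕ) : MvPolynomial (Fin d) ℝ →ₐ[ℝ] Polynomial ℝ :=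
  MvPolynomial.aeval fun i => Polynomial.X ^ ((s + 1) ^ (i : ℕ))

/-- The exponent to which the Kronecker substitution sends a monomial. -/
def kroneckerExponent (d s : ℕ) (m : Fin d →₀ ℕ) : ℕ :=
  ∑ i, m i * (s + 1) ^ (i : ℕ)

theorem kroneckerExponent_eq_finFunctionFinEquiv {d s : ℕ} {m : Fin d →₀ ℕ}
    (hm : ∀ i, m i ≤ s) : kroneckerExponent d s m =
      (finFunctionFinEquiv fun i => (⟨m i, Nat.lt_succ_of_le (hm i)⟩ : Fin (s + 1))) := by
  simp [kroneckerExponent]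

theorem kroneckerExponent_lt {d s : ℕ} {m : Fin d →₀ ℕ} (hm : ∀ i, m i ≤ s) :
    kroneckerExponent d s m < (s + 1) ^ d := by
  rw [kroneckerExponent_eq_finFunctionFinEquiv hm]
  exact Fin.is_lt _

theorem kroneckerExponent_inj {d s : ℕ} {m m' : Fin d →₀ ℕ} (hm : ∀ i, m i ≤ s)
    (hm' : ∀ i, m' i ≤ s) (h : kroneckerExponent d s m = kroneckerExponent d s m') : m = m' := by
  rw [kroneckerExponent_eq_finFunctionFinEquiv hm, kroneckerExponent_eq_finFunctionFinEquiv hm',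
    Fin.val_inj, finFunctionFinEquiv.apply_eq_iff_eq] at h
  ext i
  simpa using congrFun h i

theorem kroneckerSubst_eq_sum (d s : ℕ) (p : MvPolynomial (Fin d) ℝ) :
    kroneckerSubst d s p =
      ∑ m ∈ p.support, Polynomial.monomial (kroneckerExponent d s m) (p.coeff m) := by
  rw [kroneckerSubst, MvPolynomial.aeval_def, MvPolynomial.eval₂_eq']
  refine Finset.sum_congr rfl fun m _ => ?_
  simp only [← pow_mul, Finset.prod_pow_eq_pow_sum, kroneckerExponent, mul_comm,
    ← Polynomial.C_mul_X_pow_eq_monomial]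
  simp

theorem le_of_mem_support_of_totalDegree_le {d s : ℕ} {p : MvPolynomial (Fin d) ℝ}
    (hp : p.totalDegree ≤ s) {m : Fin d →₀ ℕ} (hm : m ∈ p.support) (i : Fin d) : m i ≤ s :=
  (MvPolynomial.degreeOf_le_iff.mp (MvPolynomial.degreeOf_le_totalDegree p i) m hm).trans hp

theorem natDegree_kroneckerSubst_le {d s : ℕ} {p : MvPolynomial (Fin d) ℝ}
    (hp : p.totalDegree ≤ s) : (kroneckerSubst d s p).natDegree ≤ (s + 1) ^ d := by
  rw [kroneckerSubst_eq_sum]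
  exact Polynomial.natDegree_sum_le_of_forall_le _ _ fun m hm =>
    (Polynomial.natDegree_monomial_le _).trans
      (kroneckerExponent_lt (le_of_mem_support_of_totalDegree_le hp hm)).le

/-- The Kronecker substitution is injective on polynomials of total degree at most `s`. -/
theorem eq_zero_of_kroneckerSubst_eq_zero {d s : ℕ} {p : MvPolynomial (Fin d) ℝ}
    (hp : p.totalDegree ≤ s) (h : kroneckerSubst d s p = 0) : p = 0 := by
  by_contra hne
  obtain ⟨m, hm⟩ := MvPolynomial.support_nonempty.mpr hne
  have hcoeff := congrArg (fun q => q.coeff (kroneckerExponent d s m)) h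
  simp only [kroneckerSubst_eq_sum, Polynomial.finsetSum_coeff, Polynomial.coeff_monomial,
    Polynomial.coeff_zero] at hcoeff
  rw [Finset.sum_eq_single_of_mem m hm, if_pos rfl] at hcoeff
  · exact MvPolynomial.mem_support_iff.mp hm hcoeff
  · intro m' hm' hmm'
    exact if_neg fun heq => hmm' (kroneckerExponent_inj
      (le_of_mem_support_of_totalDegree_le hp hm') (le_of_mem_support_of_totalDegree_le hp hm) heq)

/-- for all positive integers `d, k, s` there is `r̃ = r̃(d,k,s)` such that for
any nonzero homogeneous polynomials `p_1, …, p_k ∈ ℝ[x_1, …, x_d]` of common degree `s`, no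
two of which are linearly dependent, the powers `p_1^r, …, p_k^r` are linearly independent
for every `r > r̃`. -/
theorem high_powers_of_pairwise_independent_forms_are_independent
    (d k s : ℕ) (hd : 0 < d) (hk : 0 < k) (hs : 0 < s) :
    ∃ rt : ℕ, ∀ p : Fin k → MvPolynomial (Fin d) ℝ,
      (∀ i, p i ≠ 0) →
      (∀ i, (p i).IsHomogeneous s) →
      (∀ i j, i ≠ j → ∀ c : ℝ, p i ≠ c • p j) →
      ∀ r : ℕ, rt < r → LinearIndependent ℝ (fun i => (p i) ^ r) := by
  obtain ⟨R, hR⟩ := exists_bound_eq_zero_of_sum_mul_pow_eq_zero ((s + 1) ^ d) k 0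
  refine ⟨R, fun p hp0 hps hpp r hr => Fintype.linearIndependent_iff.mpr fun c hc i => ?_⟩
  have hdeg : ∀ i, (p i).totalDegree ≤ s := fun i => (hps i).totalDegree_le
  refine Polynomial.C_eq_zero.mp (hR (fun i => kroneckerSubst d s (p i))
    (fun i => Polynomial.C (c i)) (fun i h => hp0 i (eq_zero_of_kroneckerSubst_eq_zero (hdeg i) h))
    (fun i => natDegree_kroneckerSubst_le (hdeg i)) (fun i j hij a h => hpp i j hij a ?_)
    (fun i => (Polynomial.natDegree_C _).le) r hr ?_ i)
  · refine sub_eq_zero.mp (eq_zero_of_kroneckerSubst_eq_zero (s := s) ?_ ?_)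
    · exact (MvPolynomial.totalDegree_sub _ _).trans
        (max_le (hdeg i) ((MvPolynomial.totalDegree_smul_le _ _).trans (hdeg j)))
    · simpa [sub_eq_zero] using h
  · simpa [Polynomial.smul_eq_C_mul] using congrArg (kroneckerSubst d s) hc
end

section
/- Fix an activation degree r ≥ 1 and an architecture d = (d_0, d_1, …, d_h) of positive integers with h ≥ 2. Let W_j ∈ ℝ^{d_j × d_{j−1}} (j = 1, …, h) be weights, and for each i = 1, …, h−1 let D_i ∈ ℝ^{d_i × d_i} be an invertible diagonal matrix and P_i ∈ ℝ^{d_i × d_i} a permutation matrix. Define new weights W_1' = P_1 D_1 W_1, W_j' = P_j D_j W_j D_{j−1}^{−r} P_{j−1}^T for 2 ≤ j ≤ h−1, and W_h' = W_h D_{h−1}^{−r} P_{h−1}^T, where D^{−r} denotes the diagonal matrix whose entries are the (−r)-th powers of the diagonal entries of D. Then the two polynomial network maps coincide: W_h ρ_r(W_{h−1} ρ_r(⋯ ρ_r(W_1 x)⋯)) = W_h' ρ_r(W_{h−1}' ρ_r(⋯ ρ_r(W_1' x)⋯)) for all x ∈ ℝ^{d_0}. -/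
/-- The permutation matrix of a permutation `σ` of `Fin m`. -/
def permMat {m : ℕ} (σ : Equiv.Perm (Fin m)) : Matrix (Fin m) (Fin m) ℝ :=
  Matrix.of fun a b => if a = σ b then 1 else 0

theorem permMat_mul_apply {m n : ℕ} (σ : Equiv.Perm (Fin m)) (A : Matrix (Fin m) (Fin n) ℝ)
    (i : Fin m) (k : Fin n) : (permMat σ * A) (σ i) k = A i k := by
  simp [permMat, Matrix.mul_apply]

theorem mul_permMat_transpose_apply {m n : ℕ} (σ : Equiv.Perm (Fin n))
    (A : Matrix (Fin m) (Fin n) ℝ) (i : Fin m) (k : Fin n) :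
    (A * (permMat σ).transpose) i (σ k) = A i k := by
  simp [permMat, Matrix.mul_apply]

/-- If the units of layer `n` are rescaled by `δ` and permuted by `σ`, then a next layer whose
weights undo this has the original output, up to the output scaling `c`. -/
theorem net_succ_of_rescaled {r n : ℕ} {d : ℕ → ℕ}
    {V W : ∀ j : ℕ, Matrix (Fin (d (j + 1))) (Fin (d j)) ℝ} (hn : n ≠ 0)
    {δ : Fin (d n) → ℝ} (hδ : ∀ k, δ k ≠ 0) (σ : Equiv.Perm (Fin (d n)))
    (hnet : ∀ k, net r d V n (σ k) = MvPolynomial.C (δ k) * net r d W n k)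
    {i i' : Fin (d (n + 1))} {c : ℝ}
    (hV : ∀ k, V n i' (σ k) = c * W n i k * δ k ^ (-(r : ℤ))) :
    net r d V (n + 1) i' = MvPolynomial.C c * net r d W (n + 1) i := by
  simp only [net, if_neg hn]
  rw [← Equiv.sum_comp σ, Finset.mul_sum]
  refine Finset.sum_congr rfl fun k _ => ?_
  have hc : c * W n i k * δ k ^ (-(r : ℤ)) * δ k ^ r = c * W n i k := by
    rw [zpow_neg, zpow_natCast, inv_mul_cancel_right₀ (pow_ne_zero r (hδ k))]
  rw [hnet, hV, mul_pow, ← map_pow, ← mul_assoc, ← map_mul, hc, map_mul, mul_assoc]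

/-- Multi-homogeneity: replacing the weights
`W_1 ← P_1 D_1 W_1`, `W_j ← P_j D_j W_j D_{j-1}^{-r} P_{j-1}ᵀ` (`2 ≤ j ≤ h-1`),
`W_h ← W_h D_{h-1}^{-r} P_{h-1}ᵀ`, where `D_i` is an invertible diagonal matrix (with
diagonal entries `δ i`) and `P_i` a permutation matrix, leaves the network map unchanged.
(Here `W j`, `δ (j+1)`, `σ (j+1)` correspond to the paper's `W_{j+1}`, `D_{j+1}`,
`P_{j+1}`.) -/
theorem multi_homogeneity
    (r h : ℕ) (hr : 1 ≤ r) (hh : 2 ≤ h) (d : ℕ → ℕ) (hd : ∀ j, 0 < d j)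
    (W : ∀ j : ℕ, Matrix (Fin (d (j + 1))) (Fin (d j)) ℝ)
    (δ : ∀ i : ℕ, Fin (d i) → ℝ) (hδ : ∀ i, 1 ≤ i → i ≤ h - 1 → ∀ k, δ i k ≠ 0)
    (σ : ∀ i : ℕ, Equiv.Perm (Fin (d i))) :
    ∀ x : Fin (d 0) → ℝ,
      (fun i : Fin (d h) => MvPolynomial.eval x (net r d
        (fun j : ℕ =>
          if j = 0 then
            permMat (σ (j + 1)) * Matrix.diagonal (δ (j + 1)) * W j
          else if j + 1 = h then
            W j * Matrix.diagonal (fun k => δ j k ^ (-(r : ℤ))) * (permMat (σ j)).transpose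
          else
            permMat (σ (j + 1)) * Matrix.diagonal (δ (j + 1)) * W j *
              Matrix.diagonal (fun k => δ j k ^ (-(r : ℤ))) * (permMat (σ j)).transpose)
        h i))
      = fun i : Fin (d h) => MvPolynomial.eval x (net r d W h i) := by
  intro x
  set V : ∀ j : ℕ, Matrix (Fin (d (j + 1))) (Fin (d j)) ℝ := fun j =>
    if j = 0 then
      permMat (σ (j + 1)) * Matrix.diagonal (δ (j + 1)) * W j
    else if j + 1 = h then
      W j * Matrix.diagonal (fun k => δ j k ^ (-(r : ℤ))) * (permMat (σ j)).transpose
    else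
      permMat (σ (j + 1)) * Matrix.diagonal (δ (j + 1)) * W j *
        Matrix.diagonal (fun k => δ j k ^ (-(r : ℤ))) * (permMat (σ j)).transpose with hV
  have hidden : ∀ n, n + 1 < h → ∀ k,
      net r d V (n + 1) (σ (n + 1) k) =
        MvPolynomial.C (δ (n + 1) k) * net r d W (n + 1) k := by
    intro n
    induction n with
    | zero =>
      intro _ k
      simp only [net, if_true, hV, Finset.mul_sum]
      refine Finset.sum_congr rfl fun l _ => ?_
      rw [Matrix.mul_assoc, permMat_mul_apply, Matrix.diagonal_mul, map_mul, mul_assoc]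
    | succ n ih =>
      intro hn k
      refine net_succ_of_rescaled n.succ_ne_zero (hδ (n + 1) (by omega) (by omega)) (σ (n + 1))
        (ih (by omega)) fun l => ?_
      simp only [hV, if_neg n.succ_ne_zero, if_neg hn.ne]
      rw [mul_permMat_transpose_apply, Matrix.mul_diagonal, Matrix.mul_assoc (permMat _),
        permMat_mul_apply, Matrix.diagonal_mul]
  obtain ⟨n, rfl⟩ := Nat.exists_eq_add_of_le' hh
  funext i
  have hlast : net r d V (n + 1 + 1) i = MvPolynomial.C 1 * net r d W (n + 1 + 1) i := by
    refine net_succ_of_rescaled n.succ_ne_zero (hδ (n + 1) (by omega) (by omega)) (σ (n + 1))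
      (hidden n (by omega)) fun l => ?_
    simp only [hV, if_neg n.succ_ne_zero, if_true]
    rw [mul_permMat_transpose_apply, Matrix.mul_diagonal, one_mul]
  rw [hlast, map_one, one_mul]
end

section
/- Let P : ℝ^m → ℝ^N be a map whose N coordinate functions are polynomials in m variables with real coefficients, and let Jac P(θ) ∈ ℝ^{N × m} denote the Jacobian matrix of partial derivatives of these polynomials evaluated at θ. Suppose there exists θ₀ ∈ ℝ^m such that Jac P(θ₀) has rank N (i.e., is surjective as a linear map). Then every polynomial q in N variables with real coefficients that vanishes on the image of P (i.e., q(P(θ)) = 0 for all θ ∈ ℝ^m) is the zero polynomial; in other words, the Zariski closure of the image of P is all of ℝ^N. -/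
namespace MvPolynomial

/-- Chain rule for the partial derivatives of a composition of polynomials. -/
theorem pderiv_aeval {R σ τ : Type*} [CommRing R] [Fintype σ]
    (p : σ → MvPolynomial τ R) (q : MvPolynomial σ R) (j : τ) :
    pderiv j (aeval p q) = ∑ i, aeval p (pderiv i q) * pderiv j (p i) := by
  classical
  induction q using MvPolynomial.induction_on with
  | C a => simp [algebraMap_eq]
  | add f g hf hg => simp only [map_add, hf, hg, add_mul, Finset.sum_add_distrib]
  | mul_X f k hf =>
    have hterm (i : σ) : aeval p (pderiv i (f * X k)) * pderiv j (p i) =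
        (if i = k then aeval p f * pderiv j (p i) else 0) +
          p k * (aeval p (pderiv i f) * pderiv j (p i)) := by
      rw [pderiv_mul, map_add, map_mul, map_mul, aeval_X]
      split_ifs with h
      · subst h
        rw [pderiv_X_self, map_one]
        ring
      · rw [pderiv_X_of_ne (Ne.symm h), map_zero]
        ring
    rw [Finset.sum_congr rfl fun i _ => hterm i, Finset.sum_add_distrib, ← Finset.mul_sum, ← hf,
      Finset.sum_ite_eq' Finset.univ k, if_pos (Finset.mem_univ k), map_mul, aeval_X, pderiv_mul]
    ring

theorem totalDegree_pderiv_le {R σ : Type*} [CommSemiring R] (q : MvPolynomial σ R) (i : σ) :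
    (pderiv i q).totalDegree ≤ q.totalDegree - 1 := by
  classical
  refine Finset.sup_le fun s hs => ?_
  have hq : s + Finsupp.single i 1 ∈ q.support := by
    rw [mem_support_iff, coeff_pderiv] at hs
    exact mem_support_iff.2 (left_ne_zero_of_mul hs)
  have h := le_totalDegree hq
  rw [Finsupp.sum_add_index' (fun _ => rfl) (fun _ _ _ => rfl),
    Finsupp.sum_single_index rfl] at h
  exact Nat.le_sub_of_add_le h

/-- In characteristic zero a polynomial all of whose partial derivatives vanish is constant. -/
theorem eq_C_of_pderiv_eq_zero {R σ : Type*} [CommRing R] [IsDomain R] [CharZero R]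
    (q : MvPolynomial σ R) (h : ∀ i, pderiv i q = 0) : q = C (coeff 0 q) := by
  classical
  ext s
  rw [coeff_C]
  split_ifs with hs
  · rw [hs]
  · obtain ⟨i, hi⟩ := Finsupp.ne_iff.1 (Ne.symm hs)
    have hle : Finsupp.single i 1 ≤ s :=
      Finsupp.single_le_iff.2 (Nat.one_le_iff_ne_zero.2 hi)
    have hc := coeff_pderiv (i := i) q (s - Finsupp.single i 1)
    rw [h i, coeff_zero, tsub_add_cancel_of_le hle] at hc
    exact (mul_eq_zero.1 hc.symm).resolve_right (Nat.cast_add_one_ne_zero _)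

/-- Jacobian criterion for algebraic independence: it suffices that the Jacobian matrix at some
point has a right inverse. -/
theorem eq_zero_of_aeval_eq_zero_of_jacobian_mul_eq_one {R σ τ : Type*} [CommRing R] [IsDomain R]
    [CharZero R] [Fintype σ] [DecidableEq σ] [Fintype τ] (p : σ → MvPolynomial τ R) (x : τ → R)
    (B : Matrix τ σ R) (hB : (Matrix.of fun i j => eval x (pderiv j (p i))) * B = 1)
    (q : MvPolynomial σ R) (hq : aeval p q = 0) : q = 0 := by
  let J : Matrix σ τ (MvPolynomial τ R) := Matrix.of fun i j => pderiv j (p i)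
  let K : Matrix τ σ (MvPolynomial τ R) := B.map C
  have hdet : (J * K).det ≠ 0 := by
    intro h0
    have h1 : (eval x) (J * K).det = 1 := by
      have hmap : (eval x).mapMatrix (J * K) = 1 := by
        rw [← hB, RingHom.mapMatrix_apply, Matrix.map_mul]
        congr 1
        ext i j
        simp [K]
      rw [RingHom.map_det, hmap, Matrix.det_one]
    simp [h0] at h1
  induction hd : q.totalDegree using Nat.strong_induction_on generalizing q with
  | _ d ih =>
    have hJ : Matrix.vecMul (fun i => aeval p (pderiv i q)) J = 0 := by
      ext1 j
      have h := pderiv_aeval p q j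
      rw [hq, map_zero] at h
      exact h.symm
    have hv : (fun i => aeval p (pderiv i q)) = 0 :=
      Matrix.eq_zero_of_vecMul_eq_zero hdet (by rw [← Matrix.vecMul_vecMul, hJ, Matrix.zero_vecMul])
    have hconst : q = C (coeff 0 q) := by
      rcases Nat.eq_zero_or_pos d with rfl | hpos
      · exact totalDegree_eq_zero_iff_eq_C.1 hd
      · refine eq_C_of_pderiv_eq_zero q fun i => ih _ ?_ _ (congrFun hv i) rfl
        have := totalDegree_pderiv_le q i
        omega
    rw [hconst, aeval_C, algebraMap_eq, C_eq_zero] at hq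
    rw [hconst, hq, C_0]

end MvPolynomial


/-- let `P : ℝᵐ → ℝᴺ` be a polynomial map (coordinates `p i`). If its
Jacobian matrix has rank `N` (is surjective) at some point `θ₀`, then every polynomial `q`
in `N` variables vanishing on the image of `P` is the zero polynomial; i.e. the Zariski
closure of the image of `P` is all of `ℝᴺ`. -/
theorem full_rank_jacobian_implies_dominant
    (m N : ℕ) (p : Fin N → MvPolynomial (Fin m) ℝ)
    (hjac : ∃ θ₀ : Fin m → ℝ,
      (Matrix.of fun (i : Fin N) (j : Fin m) =>
        MvPolynomial.eval θ₀ (MvPolynomial.pderiv j (p i))).rank = N) :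
    ∀ q : MvPolynomial (Fin N) ℝ,
      (∀ θ : Fin m → ℝ, MvPolynomial.eval (fun i => MvPolynomial.eval θ (p i)) q = 0) →
      q = 0 := by
  intro q hq
  obtain ⟨θ₀, hrank⟩ := hjac
  set A : Matrix (Fin N) (Fin m) ℝ := Matrix.of fun i j =>
    MvPolynomial.eval θ₀ (MvPolynomial.pderiv j (p i))
  have hsurj : Function.Surjective A.mulVec := by
    have htop : LinearMap.range A.mulVecLin = ⊤ :=
      Submodule.eq_top_of_finrank_eq (by simpa [Matrix.rank] using hrank)
    exact LinearMap.range_eq_top.1 htop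
  obtain ⟨B, hB⟩ := Matrix.mulVec_surjective_iff_exists_right_inverse.1 hsurj
  refine MvPolynomial.eq_zero_of_aeval_eq_zero_of_jacobian_mul_eq_one p θ₀ B hB q ?_
  refine MvPolynomial.funext fun θ => ?_
  rw [map_zero, ← hq θ, MvPolynomial.aeval_def, MvPolynomial.algebraMap_eq,
    MvPolynomial.eval₂_comp_left, MvPolynomial.eval, MvPolynomial.coe_eval₂Hom]
  congr 1
  ext
  simp
end

section
/- Let d ≥ 2 and s ≥ 2 be integers, and let p_1, …, p_{2d−2} ∈ ℝ[x_1, …, x_d] be homogeneous polynomials, all of degree s. For D ∈ ℕ, let H(D) denote the dimension over ℝ of the linear span of the set of products { p_1^{a_1} ⋯ p_{2d−2}^{a_{2d−2}} : a_1 + ⋯ + a_{2d−2} = D } (the degree-D graded piece of the subalgebra ℝ[p_1, …, p_{2d−2}]), and let V(D) = C(d + Ds − 1, Ds) be the dimension of the space of homogeneous polynomials of degree Ds in d variables (the degree-D graded piece of the Veronese algebra V_{d,s}). Then V(D) − H(D) tends to +∞ as D → ∞; i.e., the Hilbert polynomials of ℝ[p_1, …, p_{2d−2}] and of V_{d,s}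 have non-constant difference. -/
open MvPolynomial

section Krull

variable {k : Type*} [Field k]

/-- Every point of affine `m`-space has height at least `m`. -/
theorem le_height_vanishingIdeal_singleton {m : ℕ} (a : Fin m → k) :
    (m : ℕ∞) ≤ (vanishingIdeal k {a} : Ideal (MvPolynomial (Fin m) k)).height := by
  let φ : ℕ → MvPolynomial (Fin m) k →ₐ[k] MvPolynomial (Fin m) k := fun i =>
    aeval fun j => if (j : ℕ) < i then C (a j) else X j
  have hφ : ∀ i, (RingHom.ker (φ i)).IsPrime := fun i => RingHom.ker_isPrime _
  have hcomp : ∀ i, (φ (i + 1)).comp (φ i) = φ (i + 1) := by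
    intro i
    ext1 j
    by_cases h : (j : ℕ) < i
    · simp [φ, h, not_lt.2 h.le]
    · simp [φ, h]
  have hheight : ∀ i ≤ m, (i : ℕ∞) ≤ (RingHom.ker (φ i)).height := by
    intro i
    induction i with
    | zero => simp
    | succ i ih =>
      intro hi
      have hlt : RingHom.ker (φ i) < RingHom.ker (φ (i + 1)) := by
        refine lt_of_le_of_ne (fun q hq => ?_) fun h => ?_
        · rw [RingHom.mem_ker] at hq ⊢
          rw [← hcomp i, AlgHom.comp_apply, hq, map_zero]
        · have hmem : X ⟨i, hi⟩ - C (a ⟨i, hi⟩) ∈ RingHom.ker (φ (i + 1)) := by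
            simp [φ, RingHom.mem_ker]
          rw [← h, RingHom.mem_ker] at hmem
          have := congrArg (MvPolynomial.eval fun _ => a ⟨i, hi⟩ + 1) hmem
          simp [φ] at this
      have := Ideal.height_add_one_le_of_lt_of_isPrime hlt
      push_cast
      exact (add_le_add_left (ih (by omega)) 1).trans this
  have hle : RingHom.ker (φ m) ≤ vanishingIdeal k {a} := by
    intro q hq
    rw [mem_vanishingIdeal_singleton_iff]
    have hev : (aeval a : MvPolynomial (Fin m) k →ₐ[k] k).comp (φ m) = aeval a := by
      ext1 j
      simp [φ]
    rw [← hev, AlgHom.comp_apply, (RingHom.mem_ker).1 hq, map_zero]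
  exact (hheight m le_rfl).trans (Ideal.height_mono hle)

/-- A solvable system of fewer equations than unknowns over an algebraically closed field has
infinitely many solutions. -/
theorem infinite_setOf_common_zeros [IsAlgClosed k] {ι : Type*} [Fintype ι] {m : ℕ}
    (hm : Fintype.card ι < m) (f : ι → MvPolynomial (Fin m) k) (a : Fin m → k)
    (ha : ∀ i, eval a (f i) = 0) : {b : Fin m → k | ∀ i, eval b (f i) = 0}.Infinite := by
  intro hfin
  set I : Ideal (MvPolynomial (Fin m) k) := Ideal.span (Set.range f) with hI
  have hIa : I ≤ vanishingIdeal k {a} := by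
    rw [hI, Ideal.span_le]
    rintro _ ⟨i, rfl⟩
    simpa [mem_vanishingIdeal_singleton_iff, aeval_eq_eval] using ha i
  obtain ⟨P, hP, -⟩ := Ideal.exists_minimalPrimes_le hIa
  have hprime : P.IsPrime := hP.1.1
  have hZ : zeroLocus k P ⊆ {b : Fin m → k | ∀ i, eval b (f i) = 0} := by
    intro b hb i
    simpa [aeval_eq_eval] using hb (f i) (hP.1.2 (Ideal.subset_span ⟨i, rfl⟩))
  have hZfin := hfin.subset hZ
  have hinf : (hZfin.toFinset.inf fun b => (vanishingIdeal k {b} : Ideal (MvPolynomial (Fin m) k)))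
      ≤ P := by
    conv_rhs => rw [← IsPrime.vanishingIdeal_zeroLocus (K := k) P]
    intro q hq b hb
    rw [Submodule.mem_finsetInf] at hq
    exact (mem_vanishingIdeal_singleton_iff _ _).1 (hq b (by simpa using hb))
  obtain ⟨b, -, hb⟩ := (hprime.inf_le' ).1 hinf
  have hle : (vanishingIdeal k {b} : Ideal (MvPolynomial (Fin m) k)).height ≤ P.height :=
    Ideal.height_mono hb
  have hcard := Ideal.height_le_card_of_mem_minimalPrimes_span (Set.finite_range f) hP
  have hrange : (Set.range f).ncard ≤ Fintype.card ι := by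
    rw [← Set.image_univ, ← Nat.card_eq_fintype_card, ← Set.ncard_univ]
    exact Set.ncard_image_le
  have := (le_height_vanishingIdeal_singleton b).trans (hle.trans hcard)
  have : m ≤ (Set.range f).ncard := by exact_mod_cast this
  omega

end Krull

section Gap

variable {k : Type*} [Field k] {σ ι : Type*} [Fintype ι]

/-- The degree-`D` piece of the algebra generated by the family `p`: the span of the products of
`D` members of the family. -/
noncomputable def productSpan (p : ι → MvPolynomial σ k) (D : ℕ) : Submodule k (MvPolynomial σ k) :=
  Submodule.span k {q | ∃ a : ι → ℕ, (∑ i, a i) = D ∧ q = ∏ i, p i ^ a i}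

theorem productSpan_le_homogeneousSubmodule {p : ι → MvPolynomial σ k} {s : ℕ}
    (hp : ∀ i, (p i).IsHomogeneous s) (D : ℕ) :
    productSpan p D ≤ homogeneousSubmodule σ k (D * s) := by
  refine Submodule.span_le.2 ?_
  rintro _ ⟨a, rfl, rfl⟩
  rw [SetLike.mem_coe, mem_homogeneousSubmodule, Finset.sum_mul]
  exact IsHomogeneous.prod _ _ _ fun i _ => by
    simpa [mul_comm] using (hp i).pow (a i)

/-- The codimension of `productSpan p D` among the forms of degree `D * s` tends to infinity. -/
def HasUnboundedGap (p : ι → MvPolynomial σ k) (s : ℕ) : Prop :=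
  ∀ N : ℕ, ∃ D₀ : ℕ, ∀ D ≥ D₀,
    Module.finrank k (productSpan p D) + N ≤ Module.finrank k (homogeneousSubmodule σ k (D * s))

theorem finite_homogeneousSubmodule [Finite σ] (m : ℕ) :
    Module.Finite k (homogeneousSubmodule σ k m) := by
  rw [Module.Finite.iff_fg]
  exact weightedHomogeneousSubmodule_fg _ _ (by simp) m

variable [Fintype σ]

/-- The derivative of a polynomial at the point `b` in the direction `v`. -/
noncomputable def dirDeriv (v b : σ → k) : MvPolynomial σ k →ₗ[k] k :=
  ∑ j, v j • ((aeval b : MvPolynomial σ k →ₐ[k] k).toLinearMap ∘ₗ (pderiv j).toLinearMap)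

theorem dirDeriv_apply (v b : σ → k) (g : MvPolynomial σ k) :
    dirDeriv v b g = ∑ j, v j * eval b (pderiv j g) := by
  simp [dirDeriv, aeval_eq_eval]

theorem dirDeriv_mul (v b : σ → k) (g h : MvPolynomial σ k) :
    dirDeriv v b (g * h) = eval b g * dirDeriv v b h + eval b h * dirDeriv v b g := by
  simp only [dirDeriv_apply, Derivation.leibniz, smul_eq_mul, map_add, map_mul, Finset.mul_sum,
    ← Finset.sum_add_distrib]
  exact Finset.sum_congr rfl fun j _ => by ring

theorem dirDeriv_one (v b : σ → k) : dirDeriv v b 1 = 0 := by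
  simp [dirDeriv_apply]

theorem dirDeriv_X (v b : σ → k) (j : σ) : dirDeriv v b (X j) = v j := by
  classical
  simp [dirDeriv_apply, pderiv_X, Pi.single_apply, apply_ite]

theorem dirDeriv_C_mul (v b : σ → k) (c : k) (g : MvPolynomial σ k) :
    dirDeriv v b (C c * g) = c * dirDeriv v b g := by
  rw [← smul_eq_C_mul, map_smul, smul_eq_mul]

theorem dirDeriv_prod_pow {p : ι → MvPolynomial σ k} {v b : σ → k} {c : k}
    (h : ∀ i, dirDeriv v b (p i) = c * eval b (p i)) (a : ι → ℕ) :
    dirDeriv v b (∏ i, p i ^ a i) = (∑ i, a i : ℕ) * c * eval b (∏ i, p i ^ a i) := by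
  have hpow : ∀ i (m : ℕ), dirDeriv v b (p i ^ m) = m * c * eval b (p i ^ m) := by
    intro i m
    induction m with
    | zero => simp [dirDeriv_one]
    | succ m ih =>
      rw [pow_succ, dirDeriv_mul, ih, h, map_mul]
      push_cast
      ring
  classical
  suffices ∀ t : Finset ι, dirDeriv v b (∏ i ∈ t, p i ^ a i) =
      (∑ i ∈ t, a i : ℕ) * c * eval b (∏ i ∈ t, p i ^ a i) from this Finset.univ
  intro t
  induction t using Finset.induction_on with
  | empty => simp [dirDeriv_one]
  | insert i t hi ih =>
    rw [Finset.prod_insert hi, Finset.sum_insert hi, dirDeriv_mul, ih, hpow, map_mul]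
    push_cast
    ring

/-- Forms vanishing doubly on a finite set in the chart `x₀ = 1` separate it from any other
point of the chart. -/
theorem exists_form_vanishing_doubly {n : ℕ} (b : Fin (n + 2) → k) (hb : b 0 = 1)
    (F : Finset (Fin (n + 2) → k)) (hF : ∀ z ∈ F, z 0 = 1) (hbF : b ∉ F) :
    ∃ g : MvPolynomial (Fin (n + 2)) k, g.IsHomogeneous (2 * F.card) ∧ eval b g ≠ 0 ∧
      ∀ z ∈ F, eval z g = 0 ∧ ∀ v, dirDeriv v z g = 0 := by
  classical
  induction F using Finset.induction_on with
  | empty => exact ⟨1, by simpa using isHomogeneous_one _ _, by simp, by simp⟩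
  | insert z F hz ih =>
    obtain ⟨g, hg, hgb, hgF⟩ := ih (fun y hy => hF y (Finset.mem_insert_of_mem hy))
      (fun h => hbF (Finset.mem_insert_of_mem h))
    have hne : b ≠ z := fun h => hbF (h ▸ Finset.mem_insert_self _ _)
    obtain ⟨j, hj⟩ := Function.ne_iff.1 hne
    have hz0 := hF z (Finset.mem_insert_self _ _)
    set l : MvPolynomial (Fin (n + 2)) k := X j - C (z j) * X 0 with hl
    have hlh : l.IsHomogeneous 1 :=
      (isHomogeneous_X _ _).sub (isHomogeneous_C_mul_X _ _)
    have hlz : eval z l = 0 := by simp [hl, hz0]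
    refine ⟨l ^ 2 * g, ?_, ?_, ?_⟩
    · rw [Finset.card_insert_of_notMem hz, mul_add, add_comm (2 * F.card)]
      exact (by simpa using hlh.pow 2 : (l ^ 2).IsHomogeneous 2).mul hg
    · simp [hl, hb, sub_eq_zero, hj, hgb]
    · intro y hy
      rcases Finset.mem_insert.1 hy with rfl | hy
      · simp [pow_two, dirDeriv_mul, hlz]
      · simp [dirDeriv_mul, hgF y hy]

/-- A point of the chart `x₀ = 1` at which the projective map defined by `p` fails to be
injective or immersive. -/
def IsDegeneratePoint {n : ℕ} (p : ι → MvPolynomial (Fin (n + 2)) k) (b : Fin (n + 2) → k) : Prop :=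
  b 0 = 1 ∧
    ((∃ (b' : Fin (n + 2) → k) (c : k), b' 0 = 1 ∧ b' ≠ b ∧
      ∀ i, eval b (p i) = c * eval b' (p i)) ∨
    ∃ (v : Fin (n + 2) → k) (c : k), v 0 = 0 ∧ v 1 = 1 ∧
      ∀ i, dirDeriv v b (p i) = c * eval b (p i))

/-- At a degenerate point there is a linear functional killing the products of `D` members of `p`
but not all forms vanishing doubly on a prescribed finite set. -/
theorem IsDegeneratePoint.exists_functional {n s : ℕ} (hs : 0 < s)
    {p : ι → MvPolynomial (Fin (n + 2)) k} {b : Fin (n + 2) → k} (h : IsDegeneratePoint p b)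
    (F : Finset (Fin (n + 2) → k)) (hF : ∀ z ∈ F, z 0 = 1) (hbF : b ∉ F) :
    ∃ F' : Finset (Fin (n + 2) → k), F ⊆ F' ∧ (∀ z ∈ F', z 0 = 1) ∧ ∀ D ≥ 2 * F.card + 2,
      ∃ φ : MvPolynomial (Fin (n + 2)) k →ₗ[k] k, productSpan p D ≤ LinearMap.ker φ ∧
        (∀ g, (∀ z ∈ F', eval z g = 0 ∧ ∀ v, dirDeriv v z g = 0) → φ g = 0) ∧
        ∃ g ∈ homogeneousSubmodule (Fin (n + 2)) k (D * s),
          (∀ z ∈ F, eval z g = 0 ∧ ∀ v, dirDeriv v z g = 0) ∧ φ g ≠ 0 := by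
  classical
  obtain ⟨hb, ⟨b', c, hb', hne, hc⟩ | ⟨v, c, hv0, hv1, hc⟩⟩ := h
  · refine ⟨insert b (insert b' F), fun z hz => by simp [hz], ?_, fun D hD => ?_⟩
    · intro z hz
      simp only [Finset.mem_insert] at hz
      rcases hz with rfl | rfl | hz
      exacts [hb, hb', hF z hz]
    obtain ⟨g, hg, hgb, hgF⟩ := exists_form_vanishing_doubly b hb (insert b' F)
      (by simpa [hb'] using hF) (by simp [hbF, hne.symm])
    have hcard := Finset.card_insert_le b' F
    have hDs : D ≤ D * s := Nat.le_mul_of_pos_right D hs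
    refine ⟨(aeval b).toLinearMap - c ^ D • (aeval b').toLinearMap, ?_, ?_, ?_⟩
    · refine Submodule.span_le.2 ?_
      rintro _ ⟨a, rfl, rfl⟩
      simp [aeval_eq_eval, hc, mul_pow, Finset.prod_mul_distrib, Finset.prod_pow_eq_pow_sum]
    · intro q hq
      simp [aeval_eq_eval, (hq b (by simp)).1, (hq b' (by simp)).1]
    · refine ⟨X 0 ^ (D * s - 2 * (insert b' F).card) * g, ?_, ?_, ?_⟩
      · rw [mem_homogeneousSubmodule]
        convert (isHomogeneous_X_pow (R := k) (0 : Fin (n + 2))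
          (D * s - 2 * (insert b' F).card)).mul hg using 1
        omega
      · intro z hz
        simp [dirDeriv_mul, hgF z (by simp [hz])]
      · simp [aeval_eq_eval, hb, hb', hgb, hgF b' (by simp)]
  · refine ⟨insert b F, fun z hz => by simp [hz], by simpa [hb] using hF, fun D hD => ?_⟩
    obtain ⟨g, hg, hgb, hgF⟩ := exists_form_vanishing_doubly b hb F hF hbF
    have hDs : D ≤ D * s := Nat.le_mul_of_pos_right D hs
    refine ⟨dirDeriv v b - (D * c) • (aeval b).toLinearMap, ?_, ?_, ?_⟩
    · refine Submodule.span_le.2 ?_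
      rintro _ ⟨a, rfl, rfl⟩
      simp only [SetLike.mem_coe, LinearMap.mem_ker, LinearMap.sub_apply, LinearMap.smul_apply,
        AlgHom.toLinearMap_apply, aeval_eq_eval, smul_eq_mul]
      rw [dirDeriv_prod_pow hc, sub_eq_zero]
    · intro q hq
      simp [aeval_eq_eval, (hq b (by simp)).1, (hq b (by simp)).2]
    · set l : MvPolynomial (Fin (n + 2)) k := X 1 - C (b 1) * X 0 with hl
      have hlh : l.IsHomogeneous 1 :=
        (isHomogeneous_X _ _).sub (isHomogeneous_C_mul_X _ _)
      have hlb : eval b l = 0 := by simp [hl, hb]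
      have hlv : dirDeriv v b l = 1 := by
        simp [hl, dirDeriv_C_mul, dirDeriv_X, hv0, hv1]
      refine ⟨X 0 ^ (D * s - (1 + 2 * F.card)) * (l * g), ?_, ?_, ?_⟩
      · rw [mem_homogeneousSubmodule]
        convert (isHomogeneous_X_pow (R := k) (0 : Fin (n + 2))
          (D * s - (1 + 2 * F.card))).mul (hlh.mul hg) using 1
        omega
      · intro z hz
        simp [dirDeriv_mul, hgF z hz]
      · simp [aeval_eq_eval, dirDeriv_mul, hlb, hlv, hb, hgb]

/-- Infinitely many degenerate points force an unbounded gap. -/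
theorem hasUnboundedGap_of_infinite {n s : ℕ} (hs : 0 < s)
    {p : ι → MvPolynomial (Fin (n + 2)) k} (hp : ∀ i, (p i).IsHomogeneous s)
    (h : {b | IsDegeneratePoint p b}.Infinite) : HasUnboundedGap p s := by
  suffices ∀ N : ℕ, ∃ (F : Finset (Fin (n + 2) → k)) (D₀ : ℕ), (∀ z ∈ F, z 0 = 1) ∧
      ∀ D ≥ D₀, ∃ K ≤ homogeneousSubmodule (Fin (n + 2)) k (D * s),
        productSpan p D ≤ K ∧
        (∀ g ∈ homogeneousSubmodule (Fin (n + 2)) k (D * s),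
          (∀ z ∈ F, eval z g = 0 ∧ ∀ v, dirDeriv v z g = 0) → g ∈ K) ∧
        Module.finrank k K + N ≤
          Module.finrank k (homogeneousSubmodule (Fin (n + 2)) k (D * s)) by
    intro N
    obtain ⟨F, D₀, -, hD⟩ := this N
    refine ⟨D₀, fun D hDD => ?_⟩
    obtain ⟨K, hK, hpK, -, hrank⟩ := hD D hDD
    have := finite_homogeneousSubmodule (k := k) (σ := Fin (n + 2)) (D * s)
    have : Module.Finite k K := Submodule.finiteDimensional_of_le hK
    exact (Nat.add_le_add_right (Submodule.finrank_mono hpK) N).trans hrank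
  intro N
  induction N with
  | zero =>
    exact ⟨∅, 0, by simp, fun D _ => ⟨_, le_rfl, productSpan_le_homogeneousSubmodule hp D,
      fun g hg _ => hg, le_rfl⟩⟩
  | succ N ih =>
    obtain ⟨F, D₀, hF, hD⟩ := ih
    obtain ⟨b, hb, hbF⟩ := h.exists_notMem_finset F
    obtain ⟨F', hFF', hF', hφ⟩ := hb.exists_functional hs F hF hbF
    refine ⟨F', max D₀ (2 * F.card + 2), hF', fun D hDD => ?_⟩
    obtain ⟨K, hK, hpK, hFK, hrank⟩ := hD D ((le_max_left _ _).trans hDD)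
    obtain ⟨φ, hpφ, hF'φ, g, hg, hgF, hgφ⟩ := hφ D ((le_max_right _ _).trans hDD)
    have := finite_homogeneousSubmodule (k := k) (σ := Fin (n + 2)) (D * s)
    have : Module.Finite k K := Submodule.finiteDimensional_of_le hK
    refine ⟨K ⊓ LinearMap.ker φ, inf_le_left.trans hK, le_inf hpK hpφ, fun q hq hqF => ?_, ?_⟩
    · exact ⟨hFK q hq fun z hz => hqF z (hFF' hz), hF'φ q hqF⟩
    · have hlt : K ⊓ LinearMap.ker φ < K :=
        lt_of_le_of_ne inf_le_left fun h => hgφ <|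
          LinearMap.mem_ker.1 ((inf_eq_left.1 h) (hFK g hg hgF))
      have := Submodule.finrank_lt_finrank_of_lt hlt
      omega

end Gap

section BasePoint

variable {k : Type*} [Field k] {ι : Type*} [Fintype ι]

/-- A common zero of the family `p` forces an unbounded gap. -/
theorem hasUnboundedGap_of_base_point {n s : ℕ} (hs : 0 < s)
    {p : ι → MvPolynomial (Fin (n + 2)) k} (hp : ∀ i, (p i).IsHomogeneous s)
    {u : Fin (n + 2) → k} (hu : u ≠ 0) (h : ∀ i, eval u (p i) = 0) : HasUnboundedGap p s := by
  obtain ⟨a, ha⟩ := Function.ne_iff.1 hu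
  obtain ⟨b, hb⟩ := exists_ne a
  let θ : MvPolynomial (Fin (n + 2)) k →ₐ[k] Polynomial k :=
    aeval fun i => Polynomial.C (u i) + if i = b then Polynomial.X else 0
  have hθ0 : ∀ g, (θ g).coeff 0 = eval u g := by
    intro g
    have : (Polynomial.aeval (0 : k)).comp θ = aeval u := by
      ext1 i
      simp only [AlgHom.comp_apply, aeval_X, θ]
      split_ifs <;> simp
    rw [Polynomial.coeff_zero_eq_aeval_zero, ← AlgHom.comp_apply, this, aeval_eq_eval]
  intro N
  refine ⟨N, fun D hD => ?_⟩
  have hDs : D ≤ D * s := Nat.le_mul_of_pos_right D hs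
  have := finite_homogeneousSubmodule (k := k) (σ := Fin (n + 2)) (D * s)
  let Ψ : homogeneousSubmodule (Fin (n + 2)) k (D * s) →ₗ[k] (Fin D → k) :=
    (LinearMap.pi fun j : Fin D => Polynomial.lcoeff k j) ∘ₗ θ.toLinearMap ∘ₗ
      (homogeneousSubmodule (Fin (n + 2)) k (D * s)).subtype
  have hΨ : Function.Surjective Ψ := by
    set l : MvPolynomial (Fin (n + 2)) k := X b - C (u b / u a) * X a with hl
    have hlh : l.IsHomogeneous 1 :=
      (isHomogeneous_X _ _).sub (isHomogeneous_C_mul_X _ _)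
    have hθl : θ l = Polynomial.X := by
      have : u a ≠ 0 := ha
      simp only [hl, map_sub, map_mul, aeval_X, θ, ← algebraMap_eq, AlgHom.commutes,
        if_neg hb.symm, Polynomial.algebraMap_apply, Algebra.algebraMap_self, RingHom.id_apply,
        add_zero, if_true]
      rw [← Polynomial.C_mul, div_mul_cancel₀ _ this]
      ring
    have hθa : θ (X a) = Polynomial.C (u a) := by simp [θ, hb.symm]
    have hform : ∀ j : Fin D, X a ^ (D * s - j) * l ^ (j : ℕ) ∈
        homogeneousSubmodule (Fin (n + 2)) k (D * s) := by
      intro j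
      rw [mem_homogeneousSubmodule]
      convert (isHomogeneous_X_pow (R := k) a (D * s - j)).mul (hlh.pow j) using 1
      omega
    intro y
    refine ⟨∑ j : Fin D, (y j / u a ^ (D * s - j)) • ⟨_, hform j⟩, ?_⟩
    ext i
    have hcoeff : ∀ j : Fin D, Ψ ⟨_, hform j⟩ i =
        u a ^ (D * s - j) * if i = j then 1 else 0 := by
      intro j
      have : Ψ ⟨_, hform j⟩ i = (θ (X a ^ (D * s - j) * l ^ (j : ℕ))).coeff i := rfl
      rw [this, map_mul, map_pow, map_pow, hθl, hθa, ← Polynomial.C_pow, Polynomial.coeff_C_mul,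
        Polynomial.coeff_X_pow]
      simp [Fin.val_inj]
    rw [map_sum, Finset.sum_apply, Finset.sum_eq_single i]
    · have : u a ^ (D * s - i) ≠ 0 := pow_ne_zero _ ha
      rw [map_smul, Pi.smul_apply, hcoeff, if_pos rfl, smul_eq_mul, mul_one, div_mul_cancel₀ _ this]
    · intro j _ hji
      rw [map_smul, Pi.smul_apply, hcoeff, if_neg hji.symm, mul_zero, smul_zero]
    · simp
  have hker : productSpan p D ≤
      (LinearMap.ker Ψ).map (homogeneousSubmodule (Fin (n + 2)) k (D * s)).subtype := by
    intro q hq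
    refine ⟨⟨q, productSpan_le_homogeneousSubmodule hp D hq⟩, ?_, rfl⟩
    have hdvd : Polynomial.X ^ D ∣ θ q := by
      induction hq using Submodule.span_induction with
      | mem q hq =>
        obtain ⟨e, rfl, rfl⟩ := hq
        rw [map_prod, ← Finset.prod_pow_eq_pow_sum]
        refine Finset.prod_dvd_prod_of_dvd _ _ fun i _ => ?_
        rw [map_pow]
        exact pow_dvd_pow_of_dvd (Polynomial.X_dvd_iff.2 (by rw [hθ0, h])) _
      | zero => simp
      | add x y _ _ hx hy => rw [map_add]; exact dvd_add hx hy
      | smul c x _ hx =>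
        rw [map_smul, Polynomial.smul_eq_C_mul]
        exact dvd_mul_of_dvd_right hx _
    rw [SetLike.mem_coe, LinearMap.mem_ker]
    ext j
    exact Polynomial.X_pow_dvd_iff.1 hdvd j j.2
  have h1 := Submodule.finrank_mono hker
  rw [Submodule.finrank_map_subtype_eq] at h1
  have h2 := LinearMap.finrank_range_add_finrank_ker Ψ
  rw [LinearMap.range_eq_top.2 hΨ, finrank_top, Module.finrank_fin_fun] at h2
  omega

end BasePoint

section LinearSubstitution

variable {k : Type*} [Field k] {σ ι : Type*} [Fintype ι] [Fintype σ]

/-- Substitution of a linear map into a polynomial. -/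
noncomputable def linearSubst [DecidableEq σ] (T : (σ → k) →ₗ[k] (σ → k)) :
    MvPolynomial σ k →ₐ[k] MvPolynomial σ k :=
  aeval fun j => ∑ a, C (T (Pi.single a 1) j) * X a

variable [DecidableEq σ]

theorem eval_linearSubst (T : (σ → k) →ₗ[k] (σ → k)) (x : σ → k) (g : MvPolynomial σ k) :
    eval x (linearSubst T g) = eval (T x) g := by
  have hT : ∀ j, T x j = ∑ a, T (Pi.single a 1) j * x a := by
    intro j
    conv_lhs => rw [pi_eq_sum_univ' x, map_sum]
    simp only [map_smul, Finset.sum_apply, Pi.smul_apply, smul_eq_mul, mul_comm]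
  induction g using MvPolynomial.induction_on with
  | C c => simp [linearSubst]
  | add f g hf hg => simp [hf, hg]
  | mul_X f j hf => rw [map_mul, map_mul, map_mul, hf]; simp [linearSubst, hT]

theorem dirDeriv_linearSubst (T : (σ → k) →ₗ[k] (σ → k)) (w x : σ → k) (g : MvPolynomial σ k) :
    dirDeriv w x (linearSubst T g) = dirDeriv (T w) (T x) g := by
  have hT : ∀ j, T w j = ∑ a, T (Pi.single a 1) j * w a := by
    intro j
    conv_lhs => rw [pi_eq_sum_univ' w, map_sum]
    simp only [map_smul, Finset.sum_apply, Pi.smul_apply, smul_eq_mul, mul_comm]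
  induction g using MvPolynomial.induction_on with
  | C c => simp [linearSubst, dirDeriv_apply, ← algebraMap_eq]
  | add f g hf hg => simp [hf, hg]
  | mul_X f j hf =>
    have hX : dirDeriv w x (linearSubst T (X j)) = T w j := by
      simp [linearSubst, dirDeriv_C_mul, dirDeriv_X, hT]
    rw [map_mul, dirDeriv_mul, dirDeriv_mul, hf, hX, eval_linearSubst, eval_linearSubst,
      dirDeriv_X]

theorem isHomogeneous_linearSubst (T : (σ → k) →ₗ[k] (σ → k)) {g : MvPolynomial σ k} {s : ℕ}
    (hg : g.IsHomogeneous s) : (linearSubst T g).IsHomogeneous s := by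
  have := hg.aeval (n := 1) (fun j => ∑ a, C (T (Pi.single a 1) j) * X a) fun j =>
    IsHomogeneous.sum _ _ _ fun a _ => isHomogeneous_C_mul_X _ _
  rwa [one_mul] at this

theorem hasUnboundedGap_of_linearSubst [Infinite k] {p : ι → MvPolynomial σ k} {s : ℕ}
    {T : (σ → k) →ₗ[k] (σ → k)} (hT : Function.Surjective T)
    (h : HasUnboundedGap (fun i => linearSubst T (p i)) s) : HasUnboundedGap p s := by
  have hinj : Function.Injective (linearSubst T) := by
    refine (injective_iff_map_eq_zero _).2 fun g hg => funext fun x => ?_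
    obtain ⟨y, rfl⟩ := hT x
    rw [← eval_linearSubst, hg, map_zero, map_zero]
  have hmap : ∀ D, (productSpan p D).map (linearSubst T).toLinearMap =
      productSpan (fun i => linearSubst T (p i)) D := by
    intro D
    rw [productSpan, Submodule.map_span, productSpan]
    congr 1
    ext q
    constructor
    · rintro ⟨_, ⟨a, ha, rfl⟩, rfl⟩
      exact ⟨a, ha, by simp⟩
    · rintro ⟨a, ha, rfl⟩
      exact ⟨_, ⟨a, ha, rfl⟩, by simp⟩
  intro N
  obtain ⟨D₀, hD⟩ := h N
  refine ⟨D₀, fun D hDD => ?_⟩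
  have := hD D hDD
  rwa [← hmap,
    ← (Submodule.equivMapOfInjective (linearSubst T).toLinearMap hinj _).finrank_eq] at this

end LinearSubstitution

section Perturbation

variable {k : Type*} [Field k] {σ ι : Type*} [Fintype ι]

theorem finite_setOf_products (p : ι → MvPolynomial σ k) (D : ℕ) :
    {q | ∃ a : ι → ℕ, (∑ i, a i) = D ∧ q = ∏ i, p i ^ a i}.Finite := by
  classical
  refine ((Finset.univ.piAntidiag D).image
    fun a : ι → ℕ => ∏ i, p i ^ a i).finite_toSet.subset ?_
  rintro _ ⟨a, ha, rfl⟩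
  simp only [Finset.coe_image, Set.mem_image, Finset.mem_coe]
  exact ⟨a, by simpa using ha, rfl⟩

theorem finite_productSpan (p : ι → MvPolynomial σ k) (D : ℕ) :
    Module.Finite k (productSpan p D) :=
  FiniteDimensional.span_of_finite k (finite_setOf_products p D)

theorem exists_polynomial_eval_eq (ψ : MvPolynomial σ k →ₗ[k] k)
    (P : MvPolynomial σ (Polynomial k)) :
    ∃ q : Polynomial k, ∀ ε, q.eval ε = ψ (map (Polynomial.evalRingHom ε) P) := by
  induction P using MvPolynomial.induction_on' with
  | monomial m c =>
    refine ⟨Polynomial.C (ψ (monomial m 1)) * c, fun ε => ?_⟩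
    have : monomial m (c.eval ε) = c.eval ε • monomial (R := k) m 1 := by
      rw [smul_monomial, smul_eq_mul, mul_one]
    simp [this, mul_comm]
  | add P Q hP hQ =>
    obtain ⟨q, hq⟩ := hP
    obtain ⟨r, hr⟩ := hQ
    exact ⟨q + r, fun ε => by simp [hq, hr]⟩

/-- The dimension of `productSpan p D` is lower semicontinuous in `p`. -/
theorem finite_setOf_finrank_productSpan_lt (p p' : ι → MvPolynomial σ k) (D : ℕ) :
    {ε : k | Module.finrank k (productSpan (fun i => p i + C ε * p' i) D) <
      Module.finrank k (productSpan p D)}.Finite := by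
  classical
  obtain ⟨b, hbS, hspan, hli⟩ := exists_linearIndependent k
    {q | ∃ a : ι → ℕ, (∑ i, a i) = D ∧ q = ∏ i, p i ^ a i}
  have := ((finite_setOf_products p D).subset hbS).fintype
  choose a ha hab using fun x : b => hbS x.2
  have hbp : Submodule.span k b = productSpan p D := hspan
  have hcard : Module.finrank k (productSpan p D) = Fintype.card b := by
    rw [← hbp, ← finrank_span_eq_card hli, Subtype.range_coe]
  obtain ⟨f, hf⟩ := LinearMap.exists_extend hli.repr
  have hfb : ∀ x : b, f x = Finsupp.single x 1 := by
    intro x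
    have hx : (x : MvPolynomial σ k) ∈ Submodule.span k (Set.range ((↑) : b → MvPolynomial σ k)) :=
      Submodule.subset_span ⟨x, rfl⟩
    have := LinearMap.congr_fun hf ⟨x, hx⟩
    rw [LinearMap.comp_apply, Submodule.subtype_apply] at this
    rw [this]
    exact hli.repr_eq_single x ⟨x, hx⟩ rfl
  let P : b → MvPolynomial σ (Polynomial k) := fun x =>
    ∏ i, (map Polynomial.C (p i) + C Polynomial.X * map Polynomial.C (p' i)) ^ a x i
  have hP : ∀ ε x, map (Polynomial.evalRingHom ε) (P x) =
      ∏ i, (p i + C ε * p' i) ^ a x i := by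
    intro ε x
    have hC : (Polynomial.evalRingHom ε).comp Polynomial.C = RingHom.id k := by
      ext; simp
    simp [P, map_map, hC, MvPolynomial.map_id]
  choose q hq using fun x y : b =>
    exists_polynomial_eval_eq (Finsupp.lapply y ∘ₗ f) (P x)
  set M : Matrix b b (Polynomial k) := Matrix.of q with hM
  have hdet : ∀ ε, M.det.eval ε = (Matrix.of fun x y : b =>
      f (∏ i, (p i + C ε * p' i) ^ a x i) y).det := by
    intro ε
    rw [← Polynomial.coe_evalRingHom, RingHom.map_det]
    congr 1
    ext x y
    simp [hM, hq, hP]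
  have hM0 : M.det ≠ 0 := by
    intro h
    have h0 := hdet 0
    have hone : (Matrix.of fun x y : b => f (∏ i, (p i + C 0 * p' i) ^ a x i) y) = 1 := by
      ext x y
      simp only [map_zero, zero_mul, add_zero, ← hab x, hfb, Matrix.of_apply,
        Finsupp.single_apply, Matrix.one_apply]
    rw [h, hone] at h0
    simp at h0
  refine (M.det.rootSet_finite k).subset fun ε hε => ?_
  rw [Polynomial.mem_rootSet]
  refine ⟨hM0, ?_⟩
  rw [Polynomial.coe_aeval_eq_eval]
  by_contra hne
  rw [hdet] at hne
  have hrows := Matrix.linearIndependent_rows_of_det_ne_zero hne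
  have hli' : LinearIndependent k fun x : b => ∏ i, (p i + C ε * p' i) ^ a x i :=
    LinearIndependent.of_comp (Finsupp.lcoeFun ∘ₗ f) hrows
  have hle : Submodule.span k (Set.range fun x : b => ∏ i, (p i + C ε * p' i) ^ a x i) ≤
      productSpan (fun i => p i + C ε * p' i) D := by
    refine Submodule.span_mono ?_
    rintro _ ⟨x, rfl⟩
    exact ⟨a x, ha x, rfl⟩
  have := finite_productSpan (fun i => p i + C ε * p' i) D
  have hrank := Submodule.finrank_mono hle
  rw [finrank_span_eq_card hli', ← hcard] at hrank
  exact absurd hε (not_lt.2 hrank)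

theorem dirDeriv_X_pow_mul_X {n : ℕ} (w : Fin (n + 2) → k) (m : ℕ) (j : Fin (n + 2)) :
    dirDeriv w (Pi.single 0 1) (X 0 ^ m * X j) = if j = 0 then (m + 1 : k) * w 0 else w j := by
  have hpow : ∀ m : ℕ, dirDeriv w (Pi.single 0 1) (X 0 ^ m) = m * w 0 := by
    intro m
    induction m with
    | zero => simp [dirDeriv_one]
    | succ m ih =>
      rw [pow_succ, dirDeriv_mul, ih, dirDeriv_X]
      simp
      ring
  rw [dirDeriv_mul, hpow, dirDeriv_X]
  split_ifs with h
  · subst h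
    simp
    ring
  · simp [h]

/-- A family that is not immersive at a coordinate point can be perturbed, without decreasing the
dimensions of its product spans, so that the kernel of the differential at that point becomes
one-dimensional. -/
theorem exists_perturbation {n s : ℕ} (hs : 0 < s) (hι : n + 2 ≤ Fintype.card ι)
    (p : ι → MvPolynomial (Fin (n + 2)) ℂ) (hp : ∀ i, (p i).IsHomogeneous s)
    (htan : ∀ i, dirDeriv (Pi.single 1 1) (Pi.single 0 1) (p i) = 0) :
    ∃ r : ι → MvPolynomial (Fin (n + 2)) ℂ, (∀ i, (r i).IsHomogeneous s) ∧
      (∀ i, dirDeriv (Pi.single 1 1) (Pi.single 0 1) (r i) = 0) ∧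
      (∀ D, Module.finrank ℂ (productSpan p D) ≤ Module.finrank ℂ (productSpan r D)) ∧
      ∀ w : Fin (n + 2) → ℂ, w 1 = 0 →
        (∀ i, dirDeriv w (Pi.single 0 1) (r i) = 0) → w = 0 := by
  obtain ⟨m, rfl⟩ : ∃ m, s = m + 1 := ⟨s - 1, by omega⟩
  obtain ⟨ρ⟩ : Nonempty (Fin (n + 2) ↪ ι) :=
    Function.Embedding.nonempty_of_card_le (by simpa using hι)
  let c : Fin (n + 2) → ℂ := fun j => if j = 0 then ((m : ℂ) + 1)⁻¹ else if j = 1 then 0 else 1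
  let q : Fin (n + 2) → MvPolynomial (Fin (n + 2)) ℂ := fun j => C (c j) * (X 0 ^ m * X j)
  let p' : ι → MvPolynomial (Fin (n + 2)) ℂ := Function.extend ρ q 0
  have hm : (m : ℂ) + 1 ≠ 0 := Nat.cast_add_one_ne_zero m
  have hq : ∀ w j, dirDeriv w (Pi.single 0 1) (q j) = if j = 1 then 0 else w j := by
    intro w j
    rw [dirDeriv_C_mul, dirDeriv_X_pow_mul_X]
    by_cases h0 : j = 0
    · subst h0
      simp [c, hm]
    · by_cases h1 : j = 1 <;> simp [c, h0, h1]
  have hp'_cases : ∀ i, (∃ j, p' i = q j) ∨ p' i = 0 := by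
    intro i
    by_cases h : ∃ j, ρ j = i
    · obtain ⟨j, rfl⟩ := h
      exact .inl ⟨j, ρ.injective.extend_apply _ _ _⟩
    · exact .inr (Function.extend_apply' _ _ _ h)
  have hp' : ∀ i, (p' i).IsHomogeneous (m + 1) := by
    intro i
    rcases hp'_cases i with ⟨j, hj⟩ | h0
    · rw [hj]
      exact ((isHomogeneous_X_pow _ _).mul (isHomogeneous_X _ _)).C_mul _
    · rw [h0]
      exact isHomogeneous_zero _ _ _
  have hp'tan : ∀ i, dirDeriv (Pi.single 1 1) (Pi.single 0 1) (p' i) = 0 := by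
    intro i
    rcases hp'_cases i with ⟨j, hj⟩ | h0
    · rw [hj, hq]
      split_ifs with h <;> simp [h]
    · rw [h0, map_zero]
  let M : Module.End ℂ (Fin (n + 2) → ℂ) :=
    { toFun := fun w j => if j = 1 then 0 else dirDeriv w (Pi.single 0 1) (p (ρ j))
      map_add' := fun v w => by
        ext j
        simp only [dirDeriv_apply, Pi.add_apply]
        split_ifs
        · simp
        · simp [add_mul, Finset.sum_add_distrib]
      map_smul' := fun a w => by
        ext j
        simp only [dirDeriv_apply, Pi.smul_apply, RingHom.id_apply, smul_eq_mul]
        split_ifs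
        · simp
        · simp [mul_assoc, Finset.mul_sum] }
  have hcount : ((⋃ D, {ε : ℂ | Module.finrank ℂ (productSpan (fun i => p i + C ε * p' i) D) <
      Module.finrank ℂ (productSpan p D)}) ∪ (fun μ => -μ) '' {μ | M.HasEigenvalue μ}).Countable :=
    (Set.countable_iUnion fun D => (finite_setOf_finrank_productSpan_lt p p' D).countable).union
      (M.finite_hasEigenvalue.countable.image _)
  obtain ⟨ε, hε⟩ := (hcount.dense_compl ℂ).nonempty
  simp only [Set.mem_compl_iff, Set.mem_union, not_or, Set.mem_iUnion, not_exists,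
    Set.mem_ofPred_eq, not_lt, Set.mem_image, not_and] at hε
  refine ⟨fun i => p i + C ε * p' i, fun i => (hp i).add ((hp' i).C_mul ε), fun i => ?_, hε.1,
    fun w hw1 hw => ?_⟩
  · rw [map_add, dirDeriv_C_mul, htan, hp'tan, mul_zero, add_zero]
  · by_contra hw0
    refine hε.2 (-ε) (Module.End.hasEigenvalue_of_hasEigenvector
      (x := w) ⟨Module.End.mem_eigenspace_iff.2 ?_, hw0⟩) (neg_neg ε)
    ext j
    by_cases hj : j = 1
    · subst hj
      simp [M, hw1]
    · have := hw (ρ j)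
      rw [map_add, dirDeriv_C_mul, show p' (ρ j) = q j from ρ.injective.extend_apply _ _ _, hq,
        if_neg hj] at this
      simp only [M, LinearMap.coe_mk, AddHom.coe_mk, if_neg hj, Pi.smul_apply, smul_eq_mul]
      linear_combination this

end Perturbation

section DoublePoints

theorem infinite_setOf_common_zeros_of_card_lt {k : Type*} [Field k] [IsAlgClosed k]
    {ι τ : Type*} [Fintype ι] [Fintype τ] (h : Fintype.card ι < Fintype.card τ)
    (f : ι → MvPolynomial τ k) (a : τ → k) (ha : ∀ i, eval a (f i) = 0) :
    {b : τ → k | ∀ i, eval b (f i) = 0}.Infinite := by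
  let e := Fintype.equivFin τ
  have hinf := infinite_setOf_common_zeros h (fun i => rename e (f i)) (a ∘ e.symm) fun i => by
    rw [eval_rename, Function.comp_assoc, e.symm_comp_self, Function.comp_id, ha]
  refine (hinf.image (f := (· ∘ e)) fun b _ c _ hbc => ?_).mono ?_
  · exact e.surjective.injective_comp_right hbc
  · rintro _ ⟨b, hb, rfl⟩ i
    have := hb i
    rwa [eval_rename] at this

variable {k : Type*} [Field k] {σ ι : Type*} [Fintype σ]

theorem exists_taylor_remainder {R : Type*} [CommRing R] [Algebra k R] (x v : σ → R) (t : R)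
    (g : MvPolynomial σ k) : ∃ e : R, aeval (x + t • v) g =
      aeval x g + t * (∑ j, v j * aeval x (pderiv j g)) + t ^ 2 * e := by
  classical
  induction g using MvPolynomial.induction_on with
  | C c => exact ⟨0, by simp⟩
  | add f g hf hg =>
    obtain ⟨e, he⟩ := hf
    obtain ⟨e', he'⟩ := hg
    refine ⟨e + e', ?_⟩
    rw [map_add, he, he']
    simp only [map_add, mul_add, Finset.sum_add_distrib]
    ring
  | mul_X f j hf =>
    obtain ⟨e, he⟩ := hf
    have hsum : ∑ a, v a * aeval x (pderiv a (f * X j)) =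
        aeval x f * v j + x j * ∑ a, v a * aeval x (pderiv a f) := by
      simp only [Derivation.leibniz, smul_eq_mul, map_add, map_mul, aeval_X, mul_add,
        Finset.sum_add_distrib, pderiv_X, Finset.mul_sum]
      congr 1
      · simp [Pi.single_apply, apply_ite, mul_comm]
      · exact Finset.sum_congr rfl fun a _ => by ring
    refine ⟨(∑ a, v a * aeval x (pderiv a f)) * v j + e * (x j + t * v j), ?_⟩
    rw [map_mul, he, hsum, map_mul, aeval_X, aeval_X]
    simp only [Pi.add_apply, Pi.smul_apply, smul_eq_mul]
    ring

theorem dirDeriv_add_left (v w b : σ → k) (g : MvPolynomial σ k) :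
    dirDeriv (v + w) b g = dirDeriv v b g + dirDeriv w b g := by
  simp [dirDeriv_apply, add_mul, Finset.sum_add_distrib]

theorem dirDeriv_smul_left (c : k) (v b : σ → k) (g : MvPolynomial σ k) :
    dirDeriv (c • v) b g = c * dirDeriv v b g := by
  simp [dirDeriv_apply, mul_assoc, Finset.mul_sum]

theorem dirDeriv_self {g : MvPolynomial σ k} {s : ℕ} (hg : g.IsHomogeneous s) (b : σ → k) :
    dirDeriv b b g = s * eval b g := by
  have := congrArg (eval b) hg.sum_X_mul_pderiv
  simpa [dirDeriv_apply] using this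

/-- The double point system: a family of polynomials in `2 * n + 4` variables whose zeros
parametrise pairs `x`, `x + t • v` of points with proportional values, with their limits at
`t = 0`, avoiding the zeros of `g`. -/
theorem exists_doublePoint_system {n : ℕ} (p : ι → MvPolynomial (Fin (n + 2)) k)
    (g : MvPolynomial (Fin (n + 2)) k) :
    ∃ f : Option ι → MvPolynomial (Fin (n + 1) ⊕ Fin n ⊕ Fin 3) k,
      ∀ (z : Fin (n + 1) → k) (w : Fin n → k) (u : Fin 3 → k),
        ∃ e : ι → k, let x : Fin (n + 2) → k := Fin.cons 1 z
          let v : Fin (n + 2) → k := Fin.cons 0 (Fin.cons 1 w)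
          eval (Sum.elim z (Sum.elim w u)) (f none) =
            u 2 * (eval x g * eval (x + u 0 • v) g) - 1 ∧ ∀ i,
          eval (Sum.elim z (Sum.elim w u)) (f (some i)) =
            dirDeriv v x (p i) + u 0 * e i - u 1 * eval x (p i) ∧
          eval (x + u 0 • v) (p i) = eval x (p i) + u 0 * dirDeriv v x (p i) + u 0 ^ 2 * e i := by
  let x : Fin (n + 2) → MvPolynomial (Fin (n + 1) ⊕ Fin n ⊕ Fin 3) k :=
    Fin.cons 1 fun j => X (.inl j)
  let v : Fin (n + 2) → MvPolynomial (Fin (n + 1) ⊕ Fin n ⊕ Fin 3) k :=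
    Fin.cons 0 (Fin.cons 1 fun j => X (.inr (.inl j)))
  let u : Fin 3 → MvPolynomial (Fin (n + 1) ⊕ Fin n ⊕ Fin 3) k := fun j => X (.inr (.inr j))
  choose e he using fun i => exists_taylor_remainder x v (u 0) (p i)
  refine ⟨fun o => o.elim (u 2 * (aeval x g * aeval (x + u 0 • v) g) - 1) fun i =>
    (∑ j, v j * aeval x (pderiv j (p i))) + u 0 * e i - u 1 * aeval x (p i), fun z w c => ?_⟩
  set E : MvPolynomial (Fin (n + 1) ⊕ Fin n ⊕ Fin 3) k →ₐ[k] k :=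
    aeval (Sum.elim z (Sum.elim w c)) with hE
  have hEx : E ∘ x = Fin.cons 1 z := by
    ext j
    refine Fin.cases ?_ (fun j => ?_) j <;> simp [x, hE]
  have hEv : E ∘ v = Fin.cons 0 (Fin.cons 1 w) := by
    ext j
    refine Fin.cases ?_ (fun j => Fin.cases ?_ (fun j => ?_) j) j <;> simp [v, hE]
  have hEu : ∀ j, E (u j) = c j := fun j => by simp [hE, u]
  have hEy : E ∘ (x + u 0 • v) = Fin.cons 1 z + c 0 • Fin.cons 0 (Fin.cons 1 w) := by
    rw [← hEx, ← hEv, ← hEu]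
    ext j
    simp
  have hcomp : ∀ (y : Fin (n + 2) → MvPolynomial (Fin (n + 1) ⊕ Fin n ⊕ Fin 3) k) q,
      E (aeval y q) = eval (E ∘ y) q := by
    intro y q
    rw [← aeval_eq_eval]
    exact comp_aeval_apply y E q
  have hsum : ∀ i, E (∑ j, v j * aeval x (pderiv j (p i))) =
      dirDeriv (E ∘ v) (E ∘ x) (p i) := by
    intro i
    simp only [dirDeriv_apply, map_sum, map_mul, hcomp, Function.comp_apply]
  refine ⟨fun i => E (e i), ?_, fun i => ⟨?_, ?_⟩⟩
  · change E _ = _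
    simp only [Option.elim_none, map_sub, map_mul, hcomp, hEx, hEy, hEu, map_one]
  · change E _ = _
    simp only [Option.elim_some, map_sub, map_mul, map_add, hcomp, hEx, hEv, hEu, hsum]
  · have := congrArg E (he i)
    simpa only [map_add, map_mul, map_pow, hcomp, hEx, hEy, hEv, hEu, hsum] using this

theorem infinite_setOf_isDegeneratePoint [Fintype ι] [IsAlgClosed k] [CharZero k] {n s : ℕ}
    (hs : 0 < s) (hι : Fintype.card ι = 2 * n + 2) {p : ι → MvPolynomial (Fin (n + 2)) k}
    (hp : ∀ i, (p i).IsHomogeneous s)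
    (htan : ∀ i, dirDeriv (Pi.single 1 1) (Pi.single 0 1) (p i) = 0)
    (hker : ∀ w : Fin (n + 2) → k, w 1 = 0 →
      (∀ i, dirDeriv w (Pi.single 0 1) (p i) = 0) → w = 0)
    (hbase : ∀ u, (∀ i, eval u (p i) = 0) → u = 0) :
    {b | IsDegeneratePoint p b}.Infinite := by
  classical
  by_contra hfin
  rw [Set.not_infinite] at hfin
  set o : Fin (n + 2) → k := Pi.single 0 1 with ho
  have ho0 : o 0 = 1 := by simp [o]
  have hxo : (Fin.cons 1 0 : Fin (n + 2) → k) = o := by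
    ext j
    refine Fin.cases ?_ (fun j => ?_) j <;> simp [o]
  have hvo : (Fin.cons 0 (Fin.cons 1 0) : Fin (n + 2) → k) = Pi.single 1 1 := by
    ext j
    refine Fin.cases ?_ (fun j => Fin.cases ?_ (fun j => ?_) j) j
    · simp
    · simp
    · rw [Fin.cons_succ, Fin.cons_succ, Pi.single_eq_of_ne]
      · rfl
      · simp [Fin.ext_iff]
  obtain ⟨g, -, hgo, hg⟩ := exists_form_vanishing_doubly o ho0 (hfin.toFinset.erase o)
    (fun z hz => by
      rw [Finset.mem_erase, Set.Finite.mem_toFinset] at hz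
      exact hz.2.1) (by simp)
  have hdeg : ∀ b, IsDegeneratePoint p b → eval b g ≠ 0 → b = o := by
    intro b hb hgb
    by_contra hbo
    exact hgb (hg b (by simpa [hbo] using hb)).1
  obtain ⟨f, hf⟩ := exists_doublePoint_system p g
  let c₀ : Fin (n + 1) ⊕ Fin n ⊕ Fin 3 → k :=
    Sum.elim 0 (Sum.elim 0 ![0, 0, (eval o g * eval o g)⁻¹])
  have hzero : ∀ i, eval c₀ (f i) = 0 := by
    obtain ⟨e, he0, he⟩ := hf 0 0 ![0, 0, (eval o g * eval o g)⁻¹]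
    rw [hxo, hvo] at he0 he
    rintro (_ | i)
    · rw [he0]
      simp [field]
    · rw [(he i).1, htan]
      simp
  have hcard : Fintype.card (Option ι) < Fintype.card (Fin (n + 1) ⊕ Fin n ⊕ Fin 3) := by
    simp [hι]
    omega
  refine infinite_setOf_common_zeros_of_card_lt hcard f c₀ hzero
    ((Set.finite_singleton c₀).subset
      fun c hc => ?_)
  obtain ⟨z, w, u, rfl⟩ : ∃ z w u, c = Sum.elim z (Sum.elim w u) :=
    ⟨c ∘ .inl, c ∘ .inr ∘ .inl, c ∘ .inr ∘ .inr, by ext (_ | _ | _) <;> rfl⟩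
  obtain ⟨e, he0, he⟩ := hf z w u
  set x : Fin (n + 2) → k := Fin.cons 1 z with hx
  set v : Fin (n + 2) → k := Fin.cons 0 (Fin.cons 1 w) with hv
  have hx0 : x 0 = 1 := rfl
  have hv0 : v 0 = 0 := rfl
  have hv1 : v 1 = 1 := rfl
  have hG : u 2 * (eval x g * eval (x + u 0 • v) g) = 1 := by
    rw [← sub_eq_zero, ← he0]
    exact hc none
  have hF : ∀ i, dirDeriv v x (p i) + u 0 * e i = u 1 * eval x (p i) := fun i => by
    rw [← sub_eq_zero, ← (he i).1]
    exact hc (some i)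
  have hgx : eval x g ≠ 0 := fun h => by simp [h] at hG
  have hgy : eval (x + u 0 • v) g ≠ 0 := fun h => by simp [h] at hG
  have hprop : ∀ i, eval (x + u 0 • v) (p i) = (1 + u 0 * u 1) * eval x (p i) := fun i => by
    rw [(he i).2]
    linear_combination u 0 * hF i
  have hu0 : u 0 = 0 := by
    by_contra hne
    have hy0 : (x + u 0 • v) 0 = 1 := by simp [hx0, hv0]
    have hxy : x ≠ x + u 0 • v := fun h => by
      have := congrFun h 1
      simp [hv1, hne] at this
    have hunit : 1 + u 0 * u 1 ≠ 0 := fun h => by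
      have := hbase (x + u 0 • v) fun i => by rw [hprop, h, zero_mul]
      rw [this] at hy0
      simp at hy0
    have h1 := hdeg x ⟨hx0, .inl ⟨_, (1 + u 0 * u 1)⁻¹, hy0, hxy.symm, fun i => by
      rw [hprop, inv_mul_cancel_left₀ hunit]⟩⟩ hgx
    have h2 := hdeg (x + u 0 • v) ⟨hy0, .inl ⟨x, _, hx0, hxy, hprop⟩⟩ hgy
    exact hxy (h1.trans h2.symm)
  simp only [hu0, zero_mul, add_zero, zero_smul] at hF hG
  have hxo' : x = o := hdeg x ⟨hx0, .inr ⟨v, u 1, hv0, hv1, hF⟩⟩ hgx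
  rw [hxo'] at hF hG
  have hs0 : (s : k) ≠ 0 := Nat.cast_ne_zero.2 hs.ne'
  have hw := hker (v + (-(u 1 / s)) • o + (-1 : k) • Pi.single 1 1) (by simp [hv1, o]) fun i => by
    rw [dirDeriv_add_left, dirDeriv_add_left, dirDeriv_smul_left, dirDeriv_smul_left, htan, hF,
      dirDeriv_self (hp i)]
    field_simp
    ring
  have hu1 : u 1 = 0 := by
    have := congrFun hw 0
    simpa [hv0, o, hs0] using this
  have hw' : v = Pi.single 1 1 := by
    rw [hu1] at hw
    simpa [add_neg_eq_zero] using hw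
  have hz : z = 0 := by
    rw [← hxo, hx] at hxo'
    exact (Fin.cons_inj.1 hxo').2
  have hw0 : w = 0 := by
    rw [← hvo, hv] at hw'
    exact (Fin.cons_inj.1 (Fin.cons_inj.1 hw').2).2
  have hu : u = ![0, 0, (eval o g * eval o g)⁻¹] := by
    ext j
    fin_cases j
    · exact hu0
    · exact hu1
    · exact eq_inv_of_mul_eq_one_left hG
  rw [hz, hw0, hu]
  rfl

end DoublePoints

section Tangency

theorem exists_linearEquiv_of_linearIndependent {k V α : Type*} [Field k] [AddCommGroup V]
    [Module k V] [Finite α] {u w : α → V} (hu : LinearIndependent k u)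
    (hw : LinearIndependent k w) : ∃ T : V ≃ₗ[k] V, ∀ a, T (u a) = w a := by
  have : FiniteDimensional k (Submodule.span k (Set.range u)) :=
    FiniteDimensional.span_of_finite k (Set.finite_range u)
  obtain ⟨T, hT⟩ := Submodule.exists_linearEquiv_restrict_eq
    (hu.linearCombinationEquiv.symm ≪≫ₗ hw.linearCombinationEquiv)
  refine ⟨T, fun a => ?_⟩
  have h := hT (hu.linearCombinationEquiv (Finsupp.single a 1))
  simpa using h.symm

theorem hasUnboundedGap_of_dirDeriv_eq_zero {ι : Type*} [Fintype ι] {n s : ℕ} (hs : 0 < s)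
    (hι : Fintype.card ι = 2 * n + 2) {p : ι → MvPolynomial (Fin (n + 2)) ℂ}
    (hp : ∀ i, (p i).IsHomogeneous s) {x v : Fin (n + 2) → ℂ} (hx : x ≠ 0) (hv : v ≠ 0)
    (h : ∀ i, dirDeriv v x (p i) = 0) : HasUnboundedGap p s := by
  by_cases hli : LinearIndependent ℂ ![x, v]
  · have hstd : LinearIndependent ℂ ![(Pi.single 0 1 : Fin (n + 2) → ℂ), Pi.single 1 1] := by
      refine (LinearIndependent.pair_iff' (by simp)).2 fun a ha => ?_
      have := congrFun ha 1
      simp at this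
    obtain ⟨T, hT⟩ := exists_linearEquiv_of_linearIndependent hstd hli
    have hT0 : T (Pi.single 0 1) = x := hT 0
    have hT1 : T (Pi.single 1 1) = v := hT 1
    refine hasUnboundedGap_of_linearSubst (T := T.toLinearMap) T.surjective ?_
    obtain ⟨r, hr, hrtan, hrank, hker⟩ := exists_perturbation hs (by omega)
      (fun i => linearSubst T.toLinearMap (p i)) (fun i => isHomogeneous_linearSubst _ (hp i))
      fun i => by
        rw [dirDeriv_linearSubst, LinearEquiv.coe_coe, hT0, hT1, h]
    suffices HasUnboundedGap r s by
      intro N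
      obtain ⟨D₀, hD₀⟩ := this N
      exact ⟨D₀, fun D hD => (Nat.add_le_add_right (hrank D) N).trans (hD₀ D hD)⟩
    by_cases hbase : ∀ u, (∀ i, eval u (r i) = 0) → u = 0
    · exact hasUnboundedGap_of_infinite hs hr
        (infinite_setOf_isDegeneratePoint hs hι hr hrtan hker hbase)
    · push Not at hbase
      obtain ⟨u, hu, hu0⟩ := hbase
      exact hasUnboundedGap_of_base_point hs hr hu0 hu
  · rw [LinearIndependent.pair_iff' hx] at hli
    push Not at hli
    obtain ⟨a, rfl⟩ := hli
    refine hasUnboundedGap_of_base_point hs hp hx fun i => ?_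
    have := h i
    rw [dirDeriv_smul_left, dirDeriv_self (hp i)] at this
    simpa [(smul_ne_zero_iff.1 hv).1, hs.ne'] using this

end Tangency

section PureSubring

variable {R S : Type*} [CommRing R] [CommRing S] [Algebra R S]

/-- Ideals of a ring that is a module retract of an extension are contracted. -/
theorem comap_map_algebraMap_of_retraction (π : S →ₗ[R] R) (hπ : π 1 = 1) (I : Ideal R) :
    (I.map (algebraMap R S)).comap (algebraMap R S) = I := by
  refine le_antisymm (fun r hr => ?_) Ideal.le_comap_map
  have hle : ∀ y ∈ I.map (algebraMap R S), ∀ t, π (t * y) ∈ I := by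
    intro y hy
    induction hy using Submodule.span_induction with
    | mem y hy =>
      obtain ⟨a, ha, rfl⟩ := hy
      intro t
      rw [mul_comm, ← Algebra.smul_def, map_smul, smul_eq_mul]
      exact I.mul_mem_right _ ha
    | zero => simp
    | add y z _ _ hy hz =>
      intro t
      rw [mul_add, map_add]
      exact I.add_mem (hy t) (hz t)
    | smul c y _ hy =>
      intro t
      rw [smul_eq_mul, ← mul_assoc]
      exact hy _
  have := hle _ (Ideal.mem_comap.1 hr) 1
  rwa [one_mul, Algebra.algebraMap_eq_smul_one, map_smul, hπ, smul_eq_mul, mul_one] at this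

theorem isNoetherianRing_of_retraction [IsNoetherianRing S] (π : S →ₗ[R] R) (hπ : π 1 = 1) :
    IsNoetherianRing R := by
  have hinj : Function.Injective (Ideal.map (algebraMap R S)) :=
    Function.LeftInverse.injective (comap_map_algebraMap_of_retraction π hπ)
  have hmono : Monotone (Ideal.map (algebraMap R S)) := fun _ _ h => Ideal.map_mono h
  exact isNoetherian_iff'.2 (hmono.strictMono_of_injective hinj).wellFoundedGT

end PureSubring

section WeightZero

variable {k : Type*} [Field k] {σ : Type*} (w : σ → ℤ)

/-- The subalgebra of polynomials of weight zero. -/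
def weightZeroSubalgebra : Subalgebra k (MvPolynomial σ k) where
  carrier := {g | IsWeightedHomogeneous w g 0}
  mul_mem' hf hg := by simpa using hf.mul hg
  add_mem' hf hg := hf.add hg
  algebraMap_mem' c := isWeightedHomogeneous_C w c

theorem weightedHomogeneousComponent_zero_mul {f : MvPolynomial σ k}
    (hf : IsWeightedHomogeneous w f 0) (g : MvPolynomial σ k) :
    weightedHomogeneousComponent w 0 (f * g) = f * weightedHomogeneousComponent w 0 g := by
  let _ := weightedGradedAlgebra k w
  have := DirectSum.coe_decompose_mul_of_left_mem_zero (weightedHomogeneousSubmodule k w)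
    (a := f) (b := g) (j := 0) hf
  rw [← decompose'_apply, ← decompose'_apply]
  exact this

/-- The projection of the polynomial ring onto its subalgebra of weight zero. -/
noncomputable def weightZeroRetraction :
    MvPolynomial σ k →ₗ[weightZeroSubalgebra (k := k) w] weightZeroSubalgebra (k := k) w where
  toFun g := ⟨weightedHomogeneousComponent w 0 g,
    weightedHomogeneousComponent_isWeightedHomogeneous 0 g⟩
  map_add' f g := by ext1; simp
  map_smul' r g := by
    ext1
    exact weightedHomogeneousComponent_zero_mul w r.2 g

theorem weightZeroRetraction_one : weightZeroRetraction (k := k) w 1 = 1 := by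
  ext1
  exact (isWeightedHomogeneous_one k w).weightedHomogeneousComponent_same

end WeightZero

section Counting

variable {k : Type*} [Field k] {n : ℕ}

/-- The weights for which a form of bidegree `(t, 1)` has weight zero. -/
def bidegreeWeight (n t : ℕ) : Fin (n + 2) ⊕ Fin (n + 2) → ℤ :=
  Sum.elim (fun _ => 1) fun _ => -t

theorem isWeightedHomogeneous_X_pow_mul_X (t : ℕ) (a b : Fin (n + 2)) :
    IsWeightedHomogeneous (bidegreeWeight n t)
      (X (.inl a) ^ t * X (.inr b) : MvPolynomial (Fin (n + 2) ⊕ Fin (n + 2)) k) 0 := by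
  have h := ((isWeightedHomogeneous_X k (bidegreeWeight n t) (.inl a)).pow t).mul
    (isWeightedHomogeneous_X k (bidegreeWeight n t) (.inr b))
  simpa [bidegreeWeight] using h

theorem isWeightedHomogeneous_rename_inl {g : MvPolynomial (Fin (n + 2)) k} {m : ℕ}
    (hg : g.IsHomogeneous m) (t : ℕ) : IsWeightedHomogeneous (bidegreeWeight n t)
      (rename (Sum.inl : _ → Fin (n + 2) ⊕ Fin (n + 2)) g) m := by
  intro c hc
  obtain ⟨u, rfl, hu⟩ := coeff_rename_ne_zero _ _ _ hc
  rw [← hg hu, Finsupp.weight_apply, Finsupp.weight_apply, Finsupp.sum_mapDomain_index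
    (by simp) (by simp [add_mul]), Finsupp.sum, Finsupp.sum]
  simp [bidegreeWeight]

/-- A polynomial of weight zero without constant term vanishes as soon as one of the two groups of
variables does. -/
theorem eval_eq_zero_of_weight_zero {t : ℕ} (ht : 0 < t)
    {g : MvPolynomial (Fin (n + 2) ⊕ Fin (n + 2)) k}
    (hg : IsWeightedHomogeneous (bidegreeWeight n t) g 0) (hg0 : coeff 0 g = 0)
    {x v : Fin (n + 2) → k} (h : x = 0 ∨ v = 0) : eval (Sum.elim x v) g = 0 := by
  rw [eval_eq']
  refine Finset.sum_eq_zero fun m hm => mul_eq_zero_of_right _ ?_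
  rw [mem_support_iff] at hm
  have hwt := hg hm
  rw [Finsupp.weight_apply, Finsupp.sum_fintype _ _ (by simp), Fintype.sum_sum_type] at hwt
  simp only [bidegreeWeight, Sum.elim_inl, Sum.elim_inr, smul_neg, Finset.sum_neg_distrib,
    nsmul_eq_mul, mul_one, ← Finset.sum_mul] at hwt
  have hsum : ∑ a, m (.inl a) = (∑ b, m (.inr b)) * t := by
    zify
    linear_combination hwt
  rw [Fintype.prod_sum_type]
  have hm0 : m ≠ 0 := by
    rintro rfl
    exact hm hg0
  have hkey : ∑ a, m (.inl a) ≠ 0 ∧ ∑ b, m (.inr b) ≠ 0 := by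
    suffices ∑ b, m (.inr b) ≠ 0 from ⟨hsum ▸ Nat.mul_ne_zero this ht.ne', this⟩
    intro h0
    rw [h0, zero_mul] at hsum
    refine hm0 (Finsupp.ext fun j => ?_)
    rcases j with a | b
    · exact Finset.sum_eq_zero_iff.1 hsum a (Finset.mem_univ a)
    · exact Finset.sum_eq_zero_iff.1 h0 b (Finset.mem_univ b)
  obtain ⟨a, -, ha⟩ := Finset.exists_ne_zero_of_sum_ne_zero hkey.1
  obtain ⟨b, -, hb⟩ := Finset.exists_ne_zero_of_sum_ne_zero hkey.2
  rcases h with rfl | rfl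
  · exact mul_eq_zero_of_left (Finset.prod_eq_zero (Finset.mem_univ a) (by simp [ha])) _
  · exact mul_eq_zero_of_right _ (Finset.prod_eq_zero (Finset.mem_univ b) (by simp [hb]))

/-- The order in which the coordinates are set to zero in a maximal chain of primes. -/
def killingOrder (n : ℕ) : Fin (n + 2) ⊕ Fin (n + 2) → ℕ :=
  Sum.elim (fun a => if (a : ℕ) = n + 1 then 2 * n + 2 else a)
    fun b => if (b : ℕ) = n + 1 then 2 * n + 2 else n + 1 + b

theorem exists_killingOrder {i : ℕ} (hi : i < 2 * n + 3) : ∃ a b : Fin (n + 2),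
    i ≤ killingOrder n (.inl a) ∧ i ≤ killingOrder n (.inr b) ∧
      (killingOrder n (.inl a) < i + 1 ∨ killingOrder n (.inr b) < i + 1) := by
  by_cases h1 : i < n + 1
  · exact ⟨⟨i, by omega⟩, Fin.last _, by
      simp only [killingOrder, Sum.elim_inl, Sum.elim_inr, Fin.val_last]
      split_ifs <;> omega⟩
  · by_cases h2 : i < 2 * n + 2
    · exact ⟨Fin.last _, ⟨i - (n + 1), by omega⟩, by
        simp only [killingOrder, Sum.elim_inl, Sum.elim_inr, Fin.val_last]
        split_ifs <;> omega⟩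
    · exact ⟨Fin.last _, Fin.last _, by
        simp only [killingOrder, Sum.elim_inl, Sum.elim_inr, Fin.val_last]
        split_ifs <;> omega⟩

/-- The substitution setting the variables of killing order less than `i` to zero. -/
noncomputable def killHom (k : Type*) [Field k] (n i : ℕ) :
    MvPolynomial (Fin (n + 2) ⊕ Fin (n + 2)) k →+* MvPolynomial (Fin (n + 2) ⊕ Fin (n + 2)) k :=
  (aeval (R := k) fun j => if killingOrder n j < i then 0 else X j).toRingHom

theorem killHom_X (i : ℕ) (j : Fin (n + 2) ⊕ Fin (n + 2)) :
    killHom k n i (X j) = if killingOrder n j < i then 0 else X j :=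
  aeval_X _ _

theorem killHom_C (i : ℕ) (c : k) : killHom k n i (C c) = C c :=
  aeval_C _ _

theorem killHom_comp (i : ℕ) :
    (killHom k n (i + 1)).comp (killHom k n i) = killHom k n (i + 1) := by
  refine ringHom_ext (fun c => ?_) fun j => ?_
  · rw [RingHom.comp_apply, killHom_C, killHom_C]
  · rw [RingHom.comp_apply, killHom_X, killHom_X]
    by_cases h : killingOrder n j < i
    · rw [if_pos h, if_pos (by omega), map_zero]
    · rw [if_neg h, killHom_X]

theorem constantCoeff_comp_killHom (i : ℕ) :
    constantCoeff.comp (killHom k n i) = constantCoeff (R := k) := by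
  ext j
  · simp [killHom_C]
  · rw [RingHom.comp_apply, killHom_X]
    split_ifs <;> simp

theorem comap_algebraMap_ker_lt {A B : Type*} [CommRing A] [Algebra k A] [CommRing B]
    {R : Subalgebra k A} {f g : A →+* B} (hfg : RingHom.ker f ≤ RingHom.ker g) {w : A} (hw : w ∈ R)
    (hf : f w ≠ 0) (hg : g w = 0) :
    (RingHom.ker f).comap (algebraMap R A) < (RingHom.ker g).comap (algebraMap R A) :=
  lt_of_le_of_ne (Ideal.comap_mono hfg) fun h =>
    hf (h.ge (show (⟨w, hw⟩ : R) ∈ (RingHom.ker g).comap (algebraMap R A) from hg))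

theorem comap_ker_killHom_lt {t i : ℕ} (ht : 0 < t) (hi : i < 2 * n + 3)
    (R : Subalgebra k (MvPolynomial (Fin (n + 2) ⊕ Fin (n + 2)) k))
    (hR : ∀ a b, X (.inl a) ^ t * X (.inr b) ∈ R) :
    (RingHom.ker (killHom k n i)).comap (algebraMap R _) <
      (RingHom.ker (killHom k n (i + 1))).comap (algebraMap R _) := by
  obtain ⟨a, b, ha, hb, hab⟩ := exists_killingOrder hi
  refine comap_algebraMap_ker_lt (fun q hq => ?_) (hR a b) ?_ ?_
  · rw [RingHom.mem_ker] at hq ⊢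
    rw [← killHom_comp i, RingHom.comp_apply, hq, map_zero]
  · rw [map_mul, map_pow, killHom_X, killHom_X, if_neg (not_lt.2 ha), if_neg (not_lt.2 hb)]
    exact mul_ne_zero (pow_ne_zero _ (X_ne_zero _)) (X_ne_zero _)
  · rw [map_mul, map_pow, killHom_X, killHom_X]
    rcases hab with h | h
    · rw [if_pos h, zero_pow ht.ne', zero_mul]
    · rw [if_pos h, mul_zero]

theorem le_height_ker_constantCoeff {t : ℕ} (ht : 0 < t)
    (R : Subalgebra k (MvPolynomial (Fin (n + 2) ⊕ Fin (n + 2)) k))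
    (hR : ∀ a b, X (.inl a) ^ t * X (.inr b) ∈ R) :
    ((2 * n + 3 : ℕ) : ℕ∞) ≤
      (RingHom.ker ((constantCoeff (R := k)).comp R.val.toRingHom)).height := by
  have hheight : ∀ i ≤ 2 * n + 3,
      (i : ℕ∞) ≤ ((RingHom.ker (killHom k n i)).comap (algebraMap R _)).height := by
    intro i
    induction i with
    | zero => simp
    | succ i ih =>
      intro hi
      have hprime : ∀ j, ((RingHom.ker (killHom k n j)).comap (algebraMap R _)).IsPrime :=
        fun j => (RingHom.ker_isPrime (killHom k n j)).comap _
      have := Ideal.height_add_one_le_of_lt_of_isPrime (comap_ker_killHom_lt ht hi R hR)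
      push_cast
      exact (add_le_add_left (ih (by omega)) 1).trans this
  refine (hheight _ le_rfl).trans (Ideal.height_mono fun q hq => ?_)
  change constantCoeff q.1 = 0
  have hq : killHom k n (2 * n + 3) q.1 = 0 := hq
  rw [← constantCoeff_comp_killHom (2 * n + 3), RingHom.comp_apply, hq, map_zero]

/-- A family in a pure subalgebra `R` whose common zeros are zeros of all members of `R` without
constant term has at least `2 * n + 3` members. -/
theorem le_card_of_forall_eval_eq_zero [IsAlgClosed k] {ι : Type*} [Fintype ι] {t : ℕ} (ht : 0 < t)
    (R : Subalgebra k (MvPolynomial (Fin (n + 2) ⊕ Fin (n + 2)) k))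
    (hR : ∀ a b, X (.inl a) ^ t * X (.inr b) ∈ R)
    (π : MvPolynomial (Fin (n + 2) ⊕ Fin (n + 2)) k →ₗ[R] R) (hπ : π 1 = 1) (f : ι → R)
    (hf : ∀ i, constantCoeff (f i).1 = 0)
    (hzero : ∀ g ∈ R, constantCoeff g = 0 → ∀ c, (∀ i, eval c (f i).1 = 0) → eval c g = 0) :
    2 * n + 3 ≤ Fintype.card ι := by
  have hnoeth : IsNoetherianRing R := isNoetherianRing_of_retraction π hπ
  set 𝔪 := RingHom.ker ((constantCoeff (R := k)).comp R.val.toRingHom) with hm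
  have hprime : 𝔪.IsPrime := RingHom.ker_isPrime _
  set I : Ideal R := Ideal.span (Set.range f) with hI
  have hIm : I ≤ 𝔪 := by
    rw [hI, Ideal.span_le]
    rintro _ ⟨i, rfl⟩
    exact hf i
  have hrad : 𝔪 ≤ I.radical := by
    intro g hg
    have hmem : g.1 ∈ (I.map (algebraMap R (MvPolynomial _ k))).radical := by
      rw [← vanishingIdeal_zeroLocus_eq_radical (K := k)]
      intro c hc
      refine hzero g.1 g.2 hg c fun i => ?_
      exact hc _ (Ideal.mem_map_of_mem _ (Ideal.subset_span ⟨i, rfl⟩))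
    obtain ⟨N, hN⟩ := hmem
    refine ⟨N, ?_⟩
    rw [← comap_map_algebraMap_of_retraction π hπ I, Ideal.mem_comap, map_pow]
    exact hN
  have hmin : 𝔪 ∈ I.minimalPrimes :=
    ⟨⟨hprime, hIm⟩, fun Q hQ _ => hrad.trans (hQ.1.radical_le_iff.2 hQ.2)⟩
  have hcard := Ideal.height_le_card_of_mem_minimalPrimes_span (Set.finite_range f) hmin
  have hrange : (Set.range f).ncard ≤ Fintype.card ι := by
    rw [← Set.image_univ, ← Nat.card_eq_fintype_card, ← Set.ncard_univ]
    exact Set.ncard_image_le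
  have := (le_height_ker_constantCoeff ht R hR).trans hcard
  have : 2 * n + 3 ≤ (Set.range f).ncard := by exact_mod_cast this
  omega

/-- Fewer than `2 * n + 3` forms in `n + 2` variables never define an immersion. -/
theorem exists_dirDeriv_eq_zero [IsAlgClosed k] {ι : Type*} [Fintype ι] {s : ℕ} (hs : 2 ≤ s)
    (hι : Fintype.card ι < 2 * n + 3) {p : ι → MvPolynomial (Fin (n + 2)) k}
    (hp : ∀ i, (p i).IsHomogeneous s) :
    ∃ x v : Fin (n + 2) → k, x ≠ 0 ∧ v ≠ 0 ∧ ∀ i, dirDeriv v x (p i) = 0 := by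
  by_contra! hno
  obtain ⟨t, rfl⟩ : ∃ t, s = t + 1 := ⟨s - 1, by omega⟩
  have ht : 0 < t := by omega
  let f : ι → MvPolynomial (Fin (n + 2) ⊕ Fin (n + 2)) k := fun i =>
    ∑ b, rename Sum.inl (pderiv b (p i)) * X (.inr b)
  have hfR : ∀ i, f i ∈ weightZeroSubalgebra (bidegreeWeight n t) := fun i =>
    IsWeightedHomogeneous.sum _ _ _ fun b _ => by
      have h := (isWeightedHomogeneous_rename_inl ((hp i).pderiv (i := b)) t).mul
        (isWeightedHomogeneous_X k (bidegreeWeight n t) (.inr b))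
      simpa [bidegreeWeight] using h
  have hf : ∀ i x v, eval (Sum.elim x v) (f i) = dirDeriv v x (p i) := by
    intro i x v
    simp [f, dirDeriv_apply, eval_rename, mul_comm]
  refine hι.not_ge (le_card_of_forall_eval_eq_zero ht (weightZeroSubalgebra (bidegreeWeight n t))
    (isWeightedHomogeneous_X_pow_mul_X t) (weightZeroRetraction _) (weightZeroRetraction_one _)
    (fun i => ⟨f i, hfR i⟩) (fun i => by simp [f]) fun g hg hg0 c hc => ?_)
  obtain ⟨x, v, rfl⟩ : ∃ x v, c = Sum.elim x v := ⟨c ∘ .inl, c ∘ .inr, by simp⟩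
  refine eval_eq_zero_of_weight_zero ht hg hg0 ?_
  by_contra! hxv
  obtain ⟨i, hi⟩ := hno x v hxv.1 hxv.2
  exact hi ((hf i x v).symm.trans (hc i))

end Counting

section Real

theorem linearIndependent_map_ofReal {σ b : Type*} [Fintype b] {v : b → MvPolynomial σ ℝ}
    (hv : LinearIndependent ℝ v) :
    LinearIndependent ℂ fun x => map (algebraMap ℝ ℂ) (v x) := by
  rw [Fintype.linearIndependent_iff] at hv ⊢
  intro g hg
  have hcoeff : ∀ m, ∑ x, g x * ((coeff m (v x) : ℝ) : ℂ) = 0 := by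
    intro m
    simpa [coeff_sum, coeff_smul, coeff_map] using congrArg (coeff m) hg
  have hre := hv (fun x => (g x).re) <| by
    ext m
    simpa [coeff_sum, coeff_smul] using congrArg Complex.re (hcoeff m)
  have him := hv (fun x => (g x).im) <| by
    ext m
    simpa [coeff_sum, coeff_smul] using congrArg Complex.im (hcoeff m)
  exact fun x => Complex.ext (hre x) (him x)

theorem finrank_productSpan_le_map_ofReal {σ ι : Type*} [Fintype ι] (p : ι → MvPolynomial σ ℝ)
    (D : ℕ) : Module.finrank ℝ (productSpan p D) ≤
      Module.finrank ℂ (productSpan (fun i => map (algebraMap ℝ ℂ) (p i)) D) := by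
  obtain ⟨b, hbS, hspan, hli⟩ := exists_linearIndependent ℝ
    {q | ∃ a : ι → ℕ, (∑ i, a i) = D ∧ q = ∏ i, p i ^ a i}
  have := ((finite_setOf_products p D).subset hbS).fintype
  have hbp : Submodule.span ℝ b = productSpan p D := hspan
  have hcard : Module.finrank ℝ (productSpan p D) = Fintype.card b := by
    rw [← hbp, ← finrank_span_eq_card hli, Subtype.range_coe]
  have := finite_productSpan (fun i => map (algebraMap ℝ ℂ) (p i)) D
  rw [hcard, ← finrank_span_eq_card (linearIndependent_map_ofReal hli)]
  refine Submodule.finrank_mono (Submodule.span_mono ?_)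
  rintro _ ⟨x, rfl⟩
  obtain ⟨a, ha, hx⟩ := hbS x.2
  exact ⟨a, ha, by simp [hx]⟩

theorem finrank_homogeneousSubmodule {k : Type*} [Field k] (d m : ℕ) :
    Module.finrank k (homogeneousSubmodule (Fin d) k m) = (d + m - 1).choose m := by
  rw [homogeneousSubmodule_eq_finsupp_supported]
  have hset : {c : Fin d →₀ ℕ | c.degree = m} =
      (Finset.univ.finsuppAntidiag m : Finset (Fin d →₀ ℕ)) := by
    ext c
    simp [Finsupp.degree_eq_sum]
  rw [hset]
  refine (Module.finrank_eq_card_basis (basisRestrictSupport k _)).trans ?_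
  simp [Finset.card_finsuppAntidiag_nat_eq_choose]

end Real

/-- let `d, s ≥ 2` and let `p_1, …, p_{2d-2}` be homogeneous polynomials of
degree `s` in `d` variables. Writing `H(D)` for the dimension of the degree-`D` graded
piece of the subalgebra `ℝ[p_1, …, p_{2d-2}]` (the span of the products `p^a` with
`∑ a = D`) and `V(D) = C(d + Ds - 1, Ds)` for that of the Veronese algebra `V_{d,s}`, the
difference `V(D) - H(D)` tends to `+∞`; i.e. the two Hilbert polynomials have non-constant
difference. -/
theorem hilbert_polynomial_gap_for_2d_minus_2_forms
    (d s : ℕ) (hd : 2 ≤ d) (hs : 2 ≤ s)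
    (p : Fin (2 * d - 2) → MvPolynomial (Fin d) ℝ)
    (hp : ∀ i, (p i).IsHomogeneous s) :
    Filter.Tendsto
      (fun D : ℕ =>
        ((Nat.choose (d + D * s - 1) (D * s) : ℤ) -
          (Module.finrank ℝ (Submodule.span ℝ
            {q : MvPolynomial (Fin d) ℝ |
              ∃ a : Fin (2 * d - 2) → ℕ, (∑ i, a i) = D ∧ q = ∏ i, p i ^ a i}) : ℤ)))
      Filter.atTop Filter.atTop := by
  obtain ⟨n, rfl⟩ : ∃ n, d = n + 2 := ⟨d - 2, by omega⟩
  have hpC : ∀ i, (map (algebraMap ℝ ℂ) (p i)).IsHomogeneous s := fun i => (hp i).map _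
  have hcard : Fintype.card (Fin (2 * (n + 2) - 2)) = 2 * n + 2 := by
    rw [Fintype.card_fin]
    omega
  obtain ⟨x, v, hx, hv, h⟩ := exists_dirDeriv_eq_zero hs (by omega) hpC
  have hgap := hasUnboundedGap_of_dirDeriv_eq_zero (by omega) hcard hpC hx hv h
  refine Filter.tendsto_atTop.2 fun N => ?_
  obtain ⟨D₀, hD₀⟩ := hgap N.toNat
  filter_upwards [Filter.eventually_ge_atTop D₀] with D hD
  have hdim := hD₀ D hD
  rw [finrank_homogeneousSubmodule] at hdim
  have hle := finrank_productSpan_le_map_ofReal p D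
  rw [productSpan] at hle
  have := Int.self_le_toNat N
  zify at hdim hle
  linarith
end
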